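/- arXiv:2301.10911 — 4 statements merged into one kernel-verified Lean document; each statement's English description precedes it below -/
import Mathlib

section
/- Let d ≥ 3. Then E[ξ₁ᵀ · X / ‖X‖²] = τ² · (d − 2) · E[1 / ‖X‖²], and both expectations are finite. -/
open Matrix MeasureTheory ProbabilityTheory

/-- The standard Gaussian measure on `ℝ^m` (iid standard normal coordinates). -/
noncomputable def stdGaussian (m : ℕ) : Measure (Fin m → ℝ) :=
  Measure.pi fun _ => gaussianReal 0 1

/-- `μ` is the multivariate Gaussian law on `ℝ^m` with mean `mean` and covariance
matrix `V`, i.e. the law of `mean + A ζ` for a standard Gaussian `ζ` and any matrix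
`A` with `A Aᵀ = V`. -/
def IsGaussianLaw {m : ℕ} (μ : Measure (Fin m → ℝ)) (mean : Fin m → ℝ)
    (V : Matrix (Fin m) (Fin m) ℝ) : Prop :=
  ∃ A : Matrix (Fin m) (Fin m) ℝ, A * Aᵀ = V ∧
    μ = Measure.map (fun x => mean + A.mulVec x) (stdGaussian m)

/-!
The standard Gaussian on `ℝ^d` satisfies, for every centre `w` and every coordinate `i`,
`E[x_i (x_i - w_i) / ‖x - w‖²] = E[1 / ‖x - w‖² - 2 (x_i - w_i)² / ‖x - w‖⁴]`.
This is Stein's identity in one variable (`stein_real`), applied with the other coordinates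
frozen: almost surely they contribute a number `s > 0` to `‖x - w‖² = (t - w_i)² + s`, so the
function being differentiated is smooth and bounded and the pole at `w` is never met.
Summing over `i` gives the factor `d - 2` (`stein_stdGaussian`).

Fubini needs `E[1 / ‖x - w‖²] < ∞`, and the final step needs it uniformly in `w`
(`inv_normSq_lintegral_bound`). Each coordinate satisfies `(x_i - w_i)² ≤ ‖x - w‖²`, so
`1 / ‖x - w‖² ≤ ∏ i, |x_i - w_i| ^ (-2/d)`. The expectation of the product factorizes, and each
factor is bounded independently of `w_i` because `2/d < 1`; this is where `d ≥ 3` enters.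

If `A Aᵀ = τ² I`, then `A` is `τ` times an isometry, so `‖A x - y‖² = τ² ‖x - w‖²` and
`⟨A x, A x - y⟩ = τ² ⟨x, x - w⟩` with `A w = y` (`exists_center`). This carries the identity to
`ξ₁` with an arbitrary fixed vector `y`, and independence allows integrating over `y = ξ₂ + η`.
The bound being uniform in `y`, integrability holds whatever the law of `ξ₂`.
-/

open scoped ENNReal NNReal

/-! ### The inverse square norm of a shifted Gaussian vector -/

/-- `|u| ^ (-2q)` is integrable near the origin of the line when `2q < 1`. In `ℝ≥0∞` the integrand
is `∞` at `u = 0`. -/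
lemma singular_lintegral_lt_top {q : ℝ} (hq : q < 1 / 2) :
    ∫⁻ u in Metric.ball (0 : ℝ) 1, ENNReal.ofReal (u ^ 2) ^ (-q) < ∞ := by
  have hint : IntegrableOn (fun u : ℝ => ‖u‖ ^ (-(2 * q))) (Metric.ball 0 1) volume := by
    refine integrableOn_ball_of_norm_le_rpow (C := 1) (α := 2 * q) (by simp)
      (by simp; linarith) (Filter.Eventually.of_forall fun u => ?_) ?_
    · rw [one_mul, Real.norm_of_nonneg (by positivity)]
    · exact Measurable.aestronglyMeasurable (by fun_prop)
  refine lt_of_eq_of_lt (lintegral_congr_ae ?_) hint.2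
  filter_upwards [ae_restrict_of_ae (Measure.ae_ne volume (0 : ℝ))] with u hu
  have hu' : 0 < |u| := abs_pos.2 hu
  rw [Real.enorm_of_nonneg (by positivity), ENNReal.ofReal_rpow_of_pos (by positivity),
    ← sq_abs, Real.norm_eq_abs, ← Real.rpow_natCast, ← Real.rpow_mul hu'.le]
  norm_num

lemma gaussianReal_le_volume : gaussianReal 0 1 ≤ volume := by
  rw [gaussianReal_of_var_ne_zero _ one_ne_zero]
  refine (withDensity_mono (g := 1) (Filter.Eventually.of_forall fun x => ?_)).trans
    (by rw [withDensity_one])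
  rw [gaussianPDF, Pi.one_apply, ENNReal.ofReal_le_one, gaussianPDFReal]
  have h1 : 1 ≤ √(2 * Real.pi * (1 : ℝ≥0)) := by
    rw [Real.one_le_sqrt]
    have := Real.pi_gt_three
    norm_num; linarith
  refine mul_le_one₀ (inv_le_one_of_one_le₀ h1) (by positivity) (Real.exp_le_one_iff.2 ?_)
  have := sq_nonneg (x - 0)
  simp only [NNReal.coe_one]
  linarith

/-- The bound is independent of `w`: the Gaussian density is at most `1`, so the part `|t - w| < 1`
contributes at most the Lebesgue integral of `|u| ^ (-2q)` over the unit ball, and on the rest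
the integrand is at most `1`. -/
lemma gaussian_singular_bound {q : ℝ} (hq0 : 0 ≤ q) (hq : q < 1 / 2) :
    ∃ C : ℝ≥0∞, C ≠ ∞ ∧ ∀ w : ℝ,
      ∫⁻ t, ENNReal.ofReal ((t - w) ^ 2) ^ (-q) ∂(gaussianReal 0 1) ≤ C := by
  set h : ℝ → ℝ≥0∞ := fun u => ENNReal.ofReal (u ^ 2) ^ (-q)
  have hm : Measurable h := by fun_prop
  set g : ℝ → ℝ≥0∞ := (Metric.ball (0 : ℝ) 1).indicator h
  have hg : Measurable g := hm.indicator Metric.isOpen_ball.measurableSet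
  refine ⟨1 + ∫⁻ u in Metric.ball (0 : ℝ) 1, h u,
    (ENNReal.add_lt_top.2 ⟨by simp, singular_lintegral_lt_top hq⟩).ne, fun w => ?_⟩
  have hle : ∀ u, h u ≤ 1 + g u := by
    intro u
    by_cases hu : u ∈ Metric.ball (0 : ℝ) 1
    · simp [g, hu]
    · have h1 : 1 ≤ |u| := by simpa using hu
      have h2 : (1 : ℝ≥0∞) ≤ ENNReal.ofReal (u ^ 2) := by
        rw [ENNReal.one_le_ofReal, ← sq_abs]; nlinarith
      refine le_trans ?_ le_self_add
      simp only [h, ENNReal.rpow_neg]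
      exact ENNReal.inv_le_one.2 ((ENNReal.one_rpow q).symm.le.trans (ENNReal.rpow_le_rpow h2 hq0))
  calc ∫⁻ t, h (t - w) ∂(gaussianReal 0 1)
      ≤ ∫⁻ t, 1 + g (t - w) ∂(gaussianReal 0 1) := lintegral_mono fun t => hle _
    _ = 1 + ∫⁻ t, g (t - w) ∂(gaussianReal 0 1) := by
        rw [lintegral_add_left measurable_const]; simp
    _ ≤ 1 + ∫⁻ t, g (t - w) := by
        gcongr; exact gaussianReal_le_volume
    _ = 1 + ∫⁻ u in Metric.ball (0 : ℝ) 1, h u := by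
        rw [lintegral_sub_right_eq_self g w, lintegral_indicator Metric.isOpen_ball.measurableSet]

lemma sq_le_dotProduct_self {d : ℕ} (v : Fin d → ℝ) (i : Fin d) : v i ^ 2 ≤ v ⬝ᵥ v := by
  have := Finset.single_le_sum (f := fun i => v i * v i)
    (fun j _ => mul_self_nonneg _) (Finset.mem_univ i)
  simpa [sq, dotProduct] using this

/-- The inverse second moment of the norm of a standard Gaussian vector around a point `w` is
bounded uniformly in `w` as soon as `d ≥ 3`. -/
lemma inv_normSq_lintegral_bound {d : ℕ} (hd : 3 ≤ d) :
    ∃ C : ℝ≥0∞, C ≠ ∞ ∧ ∀ w : Fin d → ℝ,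
      ∫⁻ x, ENNReal.ofReal (1 / ((x - w) ⬝ᵥ (x - w))) ∂(_root_.stdGaussian d) ≤ C := by
  have hd' : (3 : ℝ) ≤ d := by exact_mod_cast hd
  have hq : (1 / d : ℝ) < 1 / 2 := by
    rw [div_lt_div_iff₀] <;> linarith
  obtain ⟨C, hC, hCw⟩ := gaussian_singular_bound (q := 1 / d) (by positivity) hq
  refine ⟨C ^ d, ENNReal.pow_ne_top hC, fun w => ?_⟩
  have hpt : ∀ x : Fin d → ℝ, ENNReal.ofReal (1 / ((x - w) ⬝ᵥ (x - w))) ≤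
      ∏ i, ENNReal.ofReal ((x i - w i) ^ 2) ^ (-(1 / d : ℝ)) := by
    intro x
    set S := (x - w) ⬝ᵥ (x - w)
    have hi : ∀ i, (x i - w i) ^ 2 ≤ S := fun i => sq_le_dotProduct_self (x - w) i
    calc ENNReal.ofReal (1 / S) ≤ (ENNReal.ofReal S)⁻¹ := by
          rcases (le_trans (sq_nonneg _) (hi ⟨0, by omega⟩)).eq_or_lt with h | h
          · simp [← h]
          · rw [one_div, ENNReal.ofReal_inv_of_pos h]
      -- split `S⁻¹` into `d` equal factors, one for each coordinate
      _ = ∏ _i : Fin d, ENNReal.ofReal S ^ (-(1 / d : ℝ)) := by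
          rw [Finset.prod_const, Finset.card_univ, Fintype.card_fin, ← ENNReal.rpow_natCast,
            ← ENNReal.rpow_mul, ← ENNReal.rpow_neg_one]
          congr 1
          field_simp
      _ ≤ _ := by
          refine Finset.prod_le_prod' fun i _ => ?_
          rw [ENNReal.rpow_neg, ENNReal.rpow_neg, ENNReal.inv_le_inv]
          exact ENNReal.rpow_le_rpow (ENNReal.ofReal_le_ofReal (hi i)) (by positivity)
  refine (lintegral_mono hpt).trans ?_
  have hind : iIndepFun (fun i (x : Fin d → ℝ) =>
      ENNReal.ofReal ((x i - w i) ^ 2) ^ (-(1 / d : ℝ))) (_root_.stdGaussian d) :=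
    iIndepFun_pi (μ := fun _ : Fin d => gaussianReal 0 1)
      (X := fun i t => ENNReal.ofReal ((t - w i) ^ 2) ^ (-(1 / d : ℝ)))
      fun i => Measurable.aemeasurable (by fun_prop)
  rw [lintegral_prod_eq_prod_lintegral_of_indepFun _ _ hind fun i => by fun_prop]
  calc _ ≤ ∏ _i : Fin d, C := Finset.prod_le_prod' fun i _ => ?_
    _ = C ^ d := by simp
  have hmp : MeasurePreserving (Function.eval i) (_root_.stdGaussian d) (gaussianReal 0 1) :=
    measurePreserving_eval (fun _ : Fin d => gaussianReal 0 1) i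
  exact (hmp.lintegral_comp (f := fun t => ENNReal.ofReal ((t - w i) ^ 2) ^ (-(1 / d : ℝ)))
    (by fun_prop)).trans_le (hCw (w i))

/-! ### Stein's identity in one variable -/

/-- Stein's identity for a bounded function with bounded derivative: integration by parts, the
standard Gaussian density `φ` satisfying `φ' x = -x * φ x`. -/
lemma stein_real {f f' : ℝ → ℝ} (hf : ∀ x, HasDerivAt f (f' x) x) {C C' : ℝ}
    (hC : ∀ x, |f x| ≤ C) (hC' : ∀ x, |f' x| ≤ C') :
    ∫ x, x * f x ∂(gaussianReal 0 1) = ∫ x, f' x ∂(gaussianReal 0 1) := by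
  have hfm : Measurable f :=
    (continuous_iff_continuousAt.2 fun x => (hf x).continuousAt).measurable
  have hfm' : Measurable f' := by
    rw [show f' = deriv f from funext fun x => (hf x).deriv.symm]; exact measurable_deriv f
  set φ := gaussianPDFReal 0 1 with hφ
  have hφd : ∀ x, HasDerivAt φ (-x * φ x) x := by
    intro x
    have h1 : HasDerivAt (fun x : ℝ => -(x - 0) ^ 2 / (2 * ((1 : NNReal) : ℝ))) (-x) x := by
      have := (((hasDerivAt_id x).sub_const 0).pow 2).neg.div_const (2 * ((1 : NNReal) : ℝ))
      refine this.congr_deriv ?_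
      simp only [id, Nat.cast_ofNat, NNReal.coe_one]
      ring
    refine (h1.exp.const_mul _).congr_deriv ?_
    rw [hφ, gaussianPDFReal]; ring
  have hφi : Integrable φ := integrable_gaussianPDFReal 0 1
  have hxφ : Integrable (fun x => -x * φ x) := by
    have h := (integrable_mul_exp_neg_mul_sq (b := 1 / 2) (by norm_num)).const_mul
      (-(√(2 * Real.pi * (1 : NNReal)))⁻¹)
    refine h.congr (Filter.Eventually.of_forall fun x => ?_)
    simp only [hφ, gaussianPDFReal, NNReal.coe_one, sub_zero, mul_one]
    rw [show -x ^ 2 / 2 = -(1 / 2) * x ^ 2 by ring]; ring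
  have key := integral_mul_deriv_eq_deriv_mul_of_integrable (u := f) (v := φ) (u' := f')
    (v' := fun x => -x * φ x) (fun x _ => hf x) (fun x _ => hφd x)
    (hxφ.bdd_mul hfm.aestronglyMeasurable (Filter.Eventually.of_forall hC))
    (hφi.bdd_mul hfm'.aestronglyMeasurable (Filter.Eventually.of_forall hC'))
    (hφi.bdd_mul hfm.aestronglyMeasurable (Filter.Eventually.of_forall hC))
  rw [integral_gaussianReal_eq_integral_smul one_ne_zero,
    integral_gaussianReal_eq_integral_smul one_ne_zero, ← neg_inj]
  simp only [smul_eq_mul, ← hφ]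
  rw [← integral_neg]
  calc _ = ∫ x, f x * (-x * φ x) := by congr 1; ext x; ring
    _ = -∫ x, f' x * φ x := key
    _ = _ := by congr 2; ext x; ring

/-- Stein's identity along one coordinate line at squared distance `s > 0` from the pole. -/
lemma stein_ratio (w : ℝ) {s : ℝ} (hs : 0 < s) :
    ∫ t, t * ((t - w) / ((t - w) ^ 2 + s)) ∂(gaussianReal 0 1)
      = ∫ t, (1 / ((t - w) ^ 2 + s) - 2 * (t - w) ^ 2 / ((t - w) ^ 2 + s) ^ 2)
          ∂(gaussianReal 0 1) := by
  have hpos : ∀ t : ℝ, 0 < (t - w) ^ 2 + s := fun t => by positivity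
  refine stein_real (C := 1 + 1 / s) (C' := 1 / s) (fun t => ?_) (fun t => ?_) fun t => ?_
  · have h1 : HasDerivAt (fun t => t - w) 1 t := (hasDerivAt_id t).sub_const w
    refine (h1.div ((h1.pow 2).add_const s) (hpos t).ne').congr_deriv ?_
    have := (hpos t).ne'
    simp only [Nat.cast_ofNat, Pi.pow_apply]
    field_simp
    ring
  · rw [abs_div, abs_of_pos (hpos t), div_le_iff₀ (hpos t)]
    have h1 : |t - w| ≤ (t - w) ^ 2 + 1 := by
      rw [← sq_abs]; nlinarith [sq_nonneg (|t - w| - 1), abs_nonneg (t - w)]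
    have h2 : (1 + 1 / s) * ((t - w) ^ 2 + s) = (t - w) ^ 2 + 1 + s + (t - w) ^ 2 / s := by
      field_simp; ring
    have h3 : 0 ≤ (t - w) ^ 2 / s := by positivity
    linarith
  · have h1 : 1 / ((t - w) ^ 2 + s) - 2 * (t - w) ^ 2 / ((t - w) ^ 2 + s) ^ 2
        = (s - (t - w) ^ 2) / ((t - w) ^ 2 + s) / ((t - w) ^ 2 + s) := by
      have := (hpos t).ne'
      field_simp; ring
    have h2 : |(s - (t - w) ^ 2) / ((t - w) ^ 2 + s)| ≤ 1 := by
      rw [abs_div, abs_of_pos (hpos t), div_le_one (hpos t), abs_le]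
      constructor <;> nlinarith [sq_nonneg (t - w)]
    rw [h1, abs_div, abs_of_pos (hpos t)]
    exact div_le_div₀ zero_le_one h2 hs (by nlinarith [sq_nonneg (t - w)])

/-! ### The identity for the standard Gaussian measure on `ℝ^d` -/

instance isProbabilityMeasure_stdGaussian (d : ℕ) :
    IsProbabilityMeasure (_root_.stdGaussian d) :=
  inferInstanceAs (IsProbabilityMeasure (Measure.pi fun _ : Fin d => gaussianReal 0 1))

lemma memLp_eval_stdGaussian {d : ℕ} (i : Fin d) :
    MemLp (fun x : Fin d → ℝ => x i) 2 (_root_.stdGaussian d) :=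
  (memLp_id_gaussianReal' (μ := 0) (v := 1) 2 (by simp)).comp_measurePreserving
    (measurePreserving_eval (fun _ : Fin d => gaussianReal 0 1) i)

/-- Also true for `N = 0`, where both quotients are `0` by convention. -/
lemma div_sq_le_one_div {a N : ℝ} (h : a ^ 2 ≤ N) : a ^ 2 / N ^ 2 ≤ 1 / N := by
  rcases (le_trans (sq_nonneg a) h).eq_or_lt with h0 | h0
  · simp [← h0]
  · rw [div_le_div_iff₀ (by positivity) h0]; nlinarith

/-- Domination by Young's inequality: `|p a / N| ≤ p² + a² / N² ≤ p² + 1 / N`. -/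
lemma integrable_mul_div {Ω : Type*} [MeasurableSpace Ω] {μ : Measure Ω} {p a N : Ω → ℝ}
    (hp : Measurable p) (ha : Measurable a) (hN : Measurable N)
    (hp2 : Integrable (fun ω => p ω ^ 2) μ) (hN1 : Integrable (fun ω => 1 / N ω) μ)
    (haN : ∀ ω, a ω ^ 2 ≤ N ω) : Integrable (fun ω => p ω * (a ω / N ω)) μ := by
  refine (hp2.add hN1).mono' (by fun_prop) (Filter.Eventually.of_forall fun ω => ?_)
  have h1 := div_sq_le_one_div (haN ω)
  rw [← div_pow] at h1
  simp only [Pi.add_apply]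
  rw [Real.norm_eq_abs, abs_le]
  constructor <;>
    nlinarith [sq_nonneg (p ω + a ω / N ω), sq_nonneg (p ω - a ω / N ω), sq_nonneg (p ω),
      sq_nonneg (a ω / N ω)]

lemma integrable_of_lintegral_ofReal_le {Ω : Type*} [MeasurableSpace Ω] {μ : Measure Ω}
    {f : Ω → ℝ} (hf : Measurable f) (hf0 : ∀ ω, 0 ≤ f ω) {C : ℝ≥0∞} (hC : C ≠ ∞)
    (h : ∫⁻ ω, ENNReal.ofReal (f ω) ∂μ ≤ C) : Integrable f μ := by
  refine ⟨hf.aestronglyMeasurable, ?_⟩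
  rw [hasFiniteIntegral_iff_ofReal (Filter.Eventually.of_forall hf0)]
  exact h.trans_lt hC.lt_top

lemma measurable_normSq {d : ℕ} (w : Fin d → ℝ) :
    Measurable fun x : Fin d → ℝ => (x - w) ⬝ᵥ (x - w) := by
  simp only [dotProduct, Pi.sub_apply]; fun_prop

lemma one_div_dotProduct_self_nonneg {d : ℕ} (v : Fin d → ℝ) : 0 ≤ 1 / (v ⬝ᵥ v) :=
  one_div_nonneg.2 (Finset.sum_nonneg fun i _ => mul_self_nonneg (v i))

lemma integrable_inv_normSq {d : ℕ} (hd : 3 ≤ d) (w : Fin d → ℝ) :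
    Integrable (fun x => 1 / ((x - w) ⬝ᵥ (x - w))) (_root_.stdGaussian d) := by
  obtain ⟨C, hC, h⟩ := inv_normSq_lintegral_bound hd
  exact integrable_of_lintegral_ofReal_le (measurable_const.div (measurable_normSq w))
    (fun x => one_div_dotProduct_self_nonneg _) hC (h w)

lemma integrable_coord {d : ℕ} (hd : 3 ≤ d) (w : Fin d → ℝ) (i : Fin d) :
    Integrable (fun x => x i * ((x i - w i) / ((x - w) ⬝ᵥ (x - w)))) (_root_.stdGaussian d) :=
  integrable_mul_div (by fun_prop) (by fun_prop) (measurable_normSq w)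
    (memLp_eval_stdGaussian i).integrable_sq (integrable_inv_normSq hd w)
    fun x => sq_le_dotProduct_self (x - w) i

lemma integrable_coord_deriv {d : ℕ} (hd : 3 ≤ d) (w : Fin d → ℝ) (i : Fin d) :
    Integrable (fun x => 1 / ((x - w) ⬝ᵥ (x - w))
      - 2 * (x i - w i) ^ 2 / ((x - w) ⬝ᵥ (x - w)) ^ 2) (_root_.stdGaussian d) := by
  have hm := measurable_normSq w
  refine (integrable_inv_normSq hd w).mono' (by fun_prop)
    (Filter.Eventually.of_forall fun x => ?_)
  have h1 := div_sq_le_one_div (sq_le_dotProduct_self (x - w) i)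
  have h2 : 0 ≤ (x - w) i ^ 2 / ((x - w) ⬝ᵥ (x - w)) ^ 2 := by positivity
  rw [Pi.sub_apply] at h1 h2
  rw [Real.norm_eq_abs, abs_le, mul_div_assoc]
  constructor <;> linarith

/-- Stein's identity in the `i`-th coordinate, from `stein_ratio` by Fubini: for almost every value
of the remaining coordinates, their squared distance to those of `w` is positive. -/
lemma stein_coord {d : ℕ} (hd : 3 ≤ d) (w : Fin d → ℝ) (i : Fin d) :
    ∫ x, x i * ((x i - w i) / ((x - w) ⬝ᵥ (x - w))) ∂(_root_.stdGaussian d)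
      = ∫ x, (1 / ((x - w) ⬝ᵥ (x - w)) - 2 * (x i - w i) ^ 2 / ((x - w) ⬝ᵥ (x - w)) ^ 2)
          ∂(_root_.stdGaussian d) := by
  have hF := integrable_coord hd w i
  have hG := integrable_coord_deriv hd w i
  obtain ⟨n, rfl⟩ : ∃ n, d = n + 1 := ⟨d - 1, by omega⟩
  have : Nonempty (Fin n) := ⟨⟨0, by omega⟩⟩
  have : NullSingletonClass (gaussianReal 0 1) := nullSingletonClass_gaussianReal one_ne_zero
  have he : MeasurePreserving (MeasurableEquiv.piFinSuccAbove (fun _ => ℝ) i).symm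
      ((gaussianReal 0 1).prod (_root_.stdGaussian n)) (_root_.stdGaussian (n + 1)) :=
    (measurePreserving_piFinSuccAbove (fun _ : Fin (n + 1) => gaussianReal 0 1) i).symm
  have hN : ∀ (t : ℝ) (y : Fin n → ℝ),
      ((MeasurableEquiv.piFinSuccAbove (fun _ => ℝ) i).symm (t, y) - w) ⬝ᵥ
        ((MeasurableEquiv.piFinSuccAbove (fun _ => ℝ) i).symm (t, y) - w)
      = (t - w i) ^ 2 + ∑ j, (y j - w (i.succAbove j)) ^ 2 := by
    intro t y
    simp [dotProduct, Fin.sum_univ_succAbove _ i, MeasurableEquiv.piFinSuccAbove_symm_apply, sq]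
  have hi : ∀ (t : ℝ) (y : Fin n → ℝ),
      (MeasurableEquiv.piFinSuccAbove (fun _ => ℝ) i).symm (t, y) i = t := by
    intro t y
    simp [MeasurableEquiv.piFinSuccAbove_symm_apply]
  have hF' := (he.integrable_comp_emb (MeasurableEquiv.measurableEmbedding _)).2 hF
  have hG' := (he.integrable_comp_emb (MeasurableEquiv.measurableEmbedding _)).2 hG
  rw [← he.integral_comp', ← he.integral_comp']
  refine (integral_prod_symm _ hF').trans (Eq.trans ?_ (integral_prod_symm _ hG').symm)
  refine integral_congr_ae ?_
  have hne : ∀ᵐ y ∂(_root_.stdGaussian n), y ≠ fun j => w (i.succAbove j) := by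
    have : NullSingletonClass (_root_.stdGaussian n) :=
      inferInstanceAs (NullSingletonClass (Measure.pi fun _ : Fin n => gaussianReal 0 1))
    exact Measure.ae_ne _ _
  filter_upwards [hne] with y hy
  have hs : 0 < ∑ j, (y j - w (i.succAbove j)) ^ 2 := by
    obtain ⟨j, hj⟩ := Function.ne_iff.1 hy
    exact Finset.sum_pos' (fun _ _ => sq_nonneg _)
      ⟨j, Finset.mem_univ j, by have := sub_ne_zero.2 hj; positivity⟩
  simp only [Function.comp_apply, hN, hi]
  exact stein_ratio (w i) hs

/-- The sum of `stein_coord` over all coordinates. -/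
lemma stein_stdGaussian {d : ℕ} (hd : 3 ≤ d) (w : Fin d → ℝ) :
    ∫ x, (x ⬝ᵥ (x - w)) / ((x - w) ⬝ᵥ (x - w)) ∂(_root_.stdGaussian d)
      = ((d : ℝ) - 2) * ∫ x, 1 / ((x - w) ⬝ᵥ (x - w)) ∂(_root_.stdGaussian d) := by
  have h1 : ∀ x : Fin d → ℝ, (x ⬝ᵥ (x - w)) / ((x - w) ⬝ᵥ (x - w))
      = ∑ i, x i * ((x i - w i) / ((x - w) ⬝ᵥ (x - w))) := by
    intro x
    rw [dotProduct, Finset.sum_div]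
    exact Finset.sum_congr rfl fun i _ => by rw [Pi.sub_apply, mul_div_assoc]
  have h2 : ∀ x : Fin d → ℝ, ∑ i, (1 / ((x - w) ⬝ᵥ (x - w))
      - 2 * (x i - w i) ^ 2 / ((x - w) ⬝ᵥ (x - w)) ^ 2)
      = ((d : ℝ) - 2) * (1 / ((x - w) ⬝ᵥ (x - w))) := by
    intro x
    have h3 : ∑ i, 2 * (x i - w i) ^ 2 = 2 * ((x - w) ⬝ᵥ (x - w)) := by
      simp [dotProduct, Finset.mul_sum, sq]
    rw [Finset.sum_sub_distrib, ← Finset.sum_div _ fun i => 2 * (x i - w i) ^ 2, h3]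
    simp only [Finset.sum_const, Finset.card_univ, Fintype.card_fin, nsmul_eq_mul]
    generalize (x - w) ⬝ᵥ (x - w) = N
    rcases eq_or_ne N 0 with rfl | hN
    · simp
    · field_simp
  simp_rw [h1]
  rw [integral_finsetSum _ fun i _ => integrable_coord hd w i]
  simp_rw [stein_coord hd w]
  rw [← integral_finsetSum _ fun i _ => integrable_coord_deriv hd w i]
  simp_rw [h2]
  rw [integral_const_mul]

/-! ### Covariance `τ² I` -/

/-- A square matrix with `A Aᵀ = τ² I` also has `Aᵀ A = τ² I`, hence is `τ` times an isometry. The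
centre `w` is the preimage `A⁻¹ y = τ⁻² Aᵀ y`. -/
lemma exists_center {d : ℕ} {τ : ℝ} (hτ : 0 < τ) {A : Matrix (Fin d) (Fin d) ℝ}
    (hA : A * Aᵀ = τ ^ 2 • (1 : Matrix (Fin d) (Fin d) ℝ)) (y : Fin d → ℝ) :
    ∃ w : Fin d → ℝ, ∀ x,
      (A *ᵥ x - y) ⬝ᵥ (A *ᵥ x - y) = τ ^ 2 * ((x - w) ⬝ᵥ (x - w)) ∧
      (A *ᵥ x) ⬝ᵥ (A *ᵥ x - y) = τ ^ 2 * (x ⬝ᵥ (x - w)) := by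
  have hτ2 : τ ^ 2 ≠ 0 := by positivity
  have h1 : A * ((τ ^ 2)⁻¹ • Aᵀ) = 1 := by
    rw [Matrix.mul_smul, hA, smul_smul, inv_mul_cancel₀ hτ2, one_smul]
  have h2 : Aᵀ * A = τ ^ 2 • (1 : Matrix (Fin d) (Fin d) ℝ) := by
    have := mul_eq_one_comm.1 h1
    rw [← this, Matrix.smul_mul, smul_smul, mul_inv_cancel₀ hτ2, one_smul]
  have h3 : ∀ u v : Fin d → ℝ, (A *ᵥ u) ⬝ᵥ (A *ᵥ v) = τ ^ 2 * (u ⬝ᵥ v) := by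
    intro u v
    rw [dotProduct_mulVec, ← mulVec_transpose, mulVec_mulVec, h2, smul_mulVec, one_mulVec,
      smul_dotProduct, smul_eq_mul]
  refine ⟨((τ ^ 2)⁻¹ • Aᵀ) *ᵥ y, fun x => ?_⟩
  have h4 : A *ᵥ x - y = A *ᵥ (x - ((τ ^ 2)⁻¹ • Aᵀ) *ᵥ y) := by
    rw [mulVec_sub, mulVec_mulVec, h1, one_mulVec]
  rw [h4]
  exact ⟨h3 _ _, h3 _ _⟩

section ScaledLaw

variable {d : ℕ} {τ : ℝ} {μ : Measure (Fin d → ℝ)}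

lemma integrable_sq_of_isGaussianLaw {V : Matrix (Fin d) (Fin d) ℝ}
    (hμ : IsGaussianLaw μ 0 V) (i : Fin d) : Integrable (fun z => z i ^ 2) μ := by
  obtain ⟨A, -, rfl⟩ := hμ
  rw [integrable_map_measure (Measurable.aestronglyMeasurable (by fun_prop)) (by fun_prop)]
  have : MemLp (fun x : Fin d → ℝ => ∑ j, A i j * x j) 2 (_root_.stdGaussian d) :=
    memLp_finsetSum _ fun j _ => (memLp_eval_stdGaussian j).const_mul _
  refine this.integrable_sq.congr (Filter.Eventually.of_forall fun x => ?_)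
  simp [mulVec, dotProduct]

lemma lintegral_inv_normSq_le_of_isGaussianLaw (hd : 3 ≤ d) (hτ : 0 < τ)
    (hμ : IsGaussianLaw μ 0 (τ ^ 2 • (1 : Matrix (Fin d) (Fin d) ℝ))) :
    ∃ C : ℝ≥0∞, C ≠ ∞ ∧ ∀ y : Fin d → ℝ,
      ∫⁻ z, ENNReal.ofReal (1 / ((z - y) ⬝ᵥ (z - y))) ∂μ ≤ C := by
  obtain ⟨A, hA, rfl⟩ := hμ
  obtain ⟨C, hC, h⟩ := inv_normSq_lintegral_bound hd
  refine ⟨ENNReal.ofReal (1 / τ ^ 2) * C, ENNReal.mul_ne_top (by simp) hC, fun y => ?_⟩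
  obtain ⟨w, hw⟩ := exists_center hτ hA y
  rw [lintegral_map (f := fun z => ENNReal.ofReal (1 / ((z - y) ⬝ᵥ (z - y))))
    (measurable_const.div (measurable_normSq y)).ennreal_ofReal (by fun_prop)]
  simp only [zero_add, (hw _).1]
  simp only [one_div, mul_inv, ENNReal.ofReal_mul (inv_nonneg.2 (sq_nonneg τ))]
  rw [lintegral_const_mul' _ _ ENNReal.ofReal_ne_top]
  gcongr
  simpa using h w

lemma stein_of_isGaussianLaw (hd : 3 ≤ d) (hτ : 0 < τ)
    (hμ : IsGaussianLaw μ 0 (τ ^ 2 • (1 : Matrix (Fin d) (Fin d) ℝ))) (y : Fin d → ℝ) :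
    ∫ z, (z ⬝ᵥ (z - y)) / ((z - y) ⬝ᵥ (z - y)) ∂μ
      = τ ^ 2 * ((d : ℝ) - 2) * ∫ z, 1 / ((z - y) ⬝ᵥ (z - y)) ∂μ := by
  obtain ⟨A, hA, rfl⟩ := hμ
  obtain ⟨w, hw⟩ := exists_center hτ hA y
  have hm := measurable_normSq y
  have hm' : Measurable fun z : Fin d → ℝ => z ⬝ᵥ (z - y) := by
    simp only [dotProduct, Pi.sub_apply]; fun_prop
  have hτ2 : τ ^ 2 ≠ 0 := by positivity
  rw [integral_map (f := fun z => (z ⬝ᵥ (z - y)) / ((z - y) ⬝ᵥ (z - y))) (by fun_prop)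
      (hm'.div hm).aestronglyMeasurable,
    integral_map (f := fun z => 1 / ((z - y) ⬝ᵥ (z - y))) (by fun_prop)
      (measurable_const.div hm).aestronglyMeasurable]
  simp only [zero_add, (hw _).1, (hw _).2, mul_div_mul_left _ _ hτ2]
  rw [stein_stdGaussian hd w]
  simp only [one_div, mul_inv]
  rw [integral_const_mul]
  field_simp

end ScaledLaw

/-! ### Independence -/

/-- Stein-lemma computation at the heart of Lemma 1 of the paper: for independent
`ξ₁ ~ N(0, τ² I_d)`, `ξ₂ ~ N(0, σ² I_d)` in `ℝ^d`, `d ≥ 3`, and `X = ξ₁ - ξ₂ - η`,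
`E[ξ₁ᵀ X / ‖X‖²] = τ² (d - 2) E[1 / ‖X‖²]`, both expectations being finite. -/
theorem stmt_3 {Ω₀ : Type*} [MeasurableSpace Ω₀] (Pr : Measure Ω₀)
    [IsProbabilityMeasure Pr] {d : ℕ} (hd : 3 ≤ d)
    (τ σ : ℝ) (hτ : 0 < τ) (hσ : 0 < σ) (η : Fin d → ℝ)
    (ξ₁ ξ₂ : Ω₀ → Fin d → ℝ) (hm1 : Measurable ξ₁) (hm2 : Measurable ξ₂)
    (hlaw1 : IsGaussianLaw (Measure.map ξ₁ Pr) 0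
      (τ ^ 2 • (1 : Matrix (Fin d) (Fin d) ℝ)))
    (hlaw2 : IsGaussianLaw (Measure.map ξ₂ Pr) 0
      (σ ^ 2 • (1 : Matrix (Fin d) (Fin d) ℝ)))
    (hindep : IndepFun ξ₁ ξ₂ Pr) :
    ∀ X : Ω₀ → Fin d → ℝ, X = (fun ω => ξ₁ ω - ξ₂ ω - η) →
      Integrable (fun ω => (ξ₁ ω ⬝ᵥ X ω) / (X ω ⬝ᵥ X ω)) Pr ∧
      Integrable (fun ω => 1 / (X ω ⬝ᵥ X ω)) Pr ∧
      ∫ ω, (ξ₁ ω ⬝ᵥ X ω) / (X ω ⬝ᵥ X ω) ∂Pr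
        = τ ^ 2 * ((d : ℝ) - 2) * ∫ ω, 1 / (X ω ⬝ᵥ X ω) ∂Pr := by
  intro X hX
  have hpair : Measurable fun ω => (ξ₁ ω, ξ₂ ω) := hm1.prodMk hm2
  have hlaw : Measure.map (fun ω => (ξ₁ ω, ξ₂ ω)) Pr
      = (Measure.map ξ₁ Pr).prod (Measure.map ξ₂ Pr) :=
    (indepFun_iff_map_prod_eq_prod_map_map hm1.aemeasurable hm2.aemeasurable).1 hindep
  have := Measure.isProbabilityMeasure_map (μ := Pr) hm1.aemeasurable
  have := Measure.isProbabilityMeasure_map (μ := Pr) hm2.aemeasurable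
  obtain ⟨C, hC, hbound⟩ := lintegral_inv_normSq_le_of_isGaussianLaw hd hτ hlaw1
  -- the two integrands as functions of the pair `(ξ₁, ξ₂)`, centred at `ξ₂ + η`
  set F : (Fin d → ℝ) × (Fin d → ℝ) → ℝ := fun p =>
    (p.1 ⬝ᵥ (p.1 - (p.2 + η))) / ((p.1 - (p.2 + η)) ⬝ᵥ (p.1 - (p.2 + η))) with hF
  set G : (Fin d → ℝ) × (Fin d → ℝ) → ℝ := fun p =>
    1 / ((p.1 - (p.2 + η)) ⬝ᵥ (p.1 - (p.2 + η))) with hG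
  have hFm : Measurable F := by
    simp only [hF, dotProduct, Pi.sub_apply, Pi.add_apply]; fun_prop
  have hGm : Measurable G := by
    simp only [hG, dotProduct, Pi.sub_apply, Pi.add_apply]; fun_prop
  have hXF : (fun ω => (ξ₁ ω ⬝ᵥ X ω) / (X ω ⬝ᵥ X ω)) = fun ω => F (ξ₁ ω, ξ₂ ω) := by
    funext ω; simp only [hX, hF, sub_sub]
  have hXG : (fun ω => 1 / (X ω ⬝ᵥ X ω)) = fun ω => G (ξ₁ ω, ξ₂ ω) := by
    funext ω; simp only [hX, hG, sub_sub]
  have hXm : ∀ i, Measurable fun ω => X ω i := by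
    intro i; simp only [hX, Pi.sub_apply]; fun_prop
  have hGint : Integrable (fun ω => 1 / (X ω ⬝ᵥ X ω)) Pr := by
    refine integrable_of_lintegral_ofReal_le (by rw [hXG]; exact hGm.comp hpair)
      (fun ω => one_div_dotProduct_self_nonneg _) hC ?_
    calc ∫⁻ ω, ENNReal.ofReal (1 / (X ω ⬝ᵥ X ω)) ∂Pr
        = ∫⁻ ω, ENNReal.ofReal (G (ξ₁ ω, ξ₂ ω)) ∂Pr := by
          simp only [funext_iff] at hXG; simp only [hXG]
      _ = ∫⁻ y, ∫⁻ z, ENNReal.ofReal (G (z, y)) ∂(Measure.map ξ₁ Pr) ∂(Measure.map ξ₂ Pr) := by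
          rw [← lintegral_map (f := fun p => ENNReal.ofReal (G p)) hGm.ennreal_ofReal hpair, hlaw,
            lintegral_prod_symm' _ hGm.ennreal_ofReal]
      _ ≤ ∫⁻ _y, C ∂(Measure.map ξ₂ Pr) := lintegral_mono fun y => hbound (y + η)
      _ = C := by simp
  have hFint : Integrable (fun ω => (ξ₁ ω ⬝ᵥ X ω) / (X ω ⬝ᵥ X ω)) Pr := by
    have hsum : (fun ω => (ξ₁ ω ⬝ᵥ X ω) / (X ω ⬝ᵥ X ω))
        = fun ω => ∑ i, ξ₁ ω i * (X ω i / (X ω ⬝ᵥ X ω)) := by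
      funext ω
      conv_lhs => rw [dotProduct, Finset.sum_div]
      exact Finset.sum_congr rfl fun i _ => mul_div_assoc _ _ _
    rw [hsum]
    refine integrable_finsetSum _ fun i _ => integrable_mul_div (by fun_prop) (hXm i)
      (by simp only [dotProduct]; fun_prop) ?_ hGint fun ω => sq_le_dotProduct_self _ i
    exact (integrable_sq_of_isGaussianLaw hlaw1 i).comp_measurable hm1
  refine ⟨hFint, hGint, ?_⟩
  rw [hXF] at hFint ⊢
  rw [hXG] at hGint ⊢
  have hFprod : Integrable F ((Measure.map ξ₁ Pr).prod (Measure.map ξ₂ Pr)) := by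
    rw [← hlaw]
    exact (integrable_map_measure hFm.aestronglyMeasurable hpair.aemeasurable).2 hFint
  have hGprod : Integrable G ((Measure.map ξ₁ Pr).prod (Measure.map ξ₂ Pr)) := by
    rw [← hlaw]
    exact (integrable_map_measure hGm.aestronglyMeasurable hpair.aemeasurable).2 hGint
  rw [← integral_map hpair.aemeasurable hFm.aestronglyMeasurable,
    ← integral_map hpair.aemeasurable hGm.aestronglyMeasurable, hlaw,
    integral_prod_symm _ hFprod, integral_prod_symm _ hGprod, ← integral_const_mul]
  exact integral_congr_ae
    (Filter.Eventually.of_forall fun y => stein_of_isGaussianLaw hd hτ hlaw1 (y + η))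
end

section
/- Let d ≥ 3 and let γ ∈ ℝ. Define the random weight ω̂ := γ·τ² / ‖X‖² and the shrinkage combination Z := ξ₁ − ω̂ · X. Then E[‖Z‖²] = d·τ² − γ·τ⁴·(2(d−2) − γ)·E[1 / ‖X‖²]. -/
/-!
Expanding the square gives
`‖Z‖² = ‖ξ₁‖² - 2 γ τ² ⟨ξ₁, X⟩ / ‖X‖² + γ² τ⁴ / ‖X‖²`,
so everything rests on the cross term, for which
`E[⟨ξ₁, X⟩ / ‖X‖²] = τ² (d - 2) E[1 / ‖X‖²]`.
Conditionally on `ξ₂` this is Stein's identity for the field `y / ‖y‖²`, `y = ξ₁ - b` with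
`b = ξ₂ + η`, whose divergence is `(d - 2) / ‖y‖²` (`stein_pi`). The field is singular at `y = 0`,
but its slice in one coordinate is smooth and bounded as soon as some other coordinate of `y` is
nonzero, which holds almost surely; hence the one-dimensional identity `stein_gaussianReal` applies
slice by slice (`stein_coord`), and Fubini's theorem averages over the remaining coordinates and
over `ξ₂` (`stein_prod`).

The use of Fubini's theorem needs `1 / ‖y‖²` to be integrable, uniformly in the centre `b`. This is
where `3 ≤ d` enters: by the AM-GM inequality `1 / ‖y‖² ≤ ∏ j, |y j| ^ (-2 / d)`, and each factor
has a finite Gaussian mean because `2 / d < 1` (`exists_lintegral_inv_le`).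

A Gaussian law is given here through some square root of its covariance; comparing characteristic
functions shows that the law of `ξ₁` is the product of real Gaussians of variance `τ²`
(`IsGaussianLaw.eq_pi`).
-/

open Matrix MeasureTheory ProbabilityTheory

/-! ### Integrability of the inverse square norm -/

/-- Singular negative moments of order `s < 1` of a real Gaussian are bounded uniformly in the
location of the singularity: the density is bounded, and `|u| ^ (-s)` is integrable near `0` and
at most `1` away from it. -/
lemma exists_lintegral_abs_rpow_le {v : NNReal} (hv : v ≠ 0) {s : ℝ} (hs0 : 0 < s) (hs1 : s < 1) :
    ∃ C : ENNReal, C ≠ ⊤ ∧ ∀ b : ℝ,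
      ∫⁻ t, ENNReal.ofReal (|t - b| ^ (-s)) ∂(gaussianReal 0 v) ≤ C := by
  let h : ℝ → ENNReal :=
    (Set.Ioo (-1 : ℝ) 1).indicator (fun u => ENNReal.ofReal (|u| ^ (-s)))
  have hmeas : Measurable h := by
    refine Measurable.indicator ?_ measurableSet_Ioo
    fun_prop
  have hfin : ∫⁻ u, h u ≠ ⊤ := by
    have hpos : IntegrableOn (fun u : ℝ => |u| ^ (-s)) (Set.Ioo 0 1) := by
      refine ((intervalIntegral.integrableOn_Ioo_rpow_iff one_pos).2
        (by linarith : -1 < -s)).congr_fun ?_ measurableSet_Ioo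
      intro u hu
      simp [abs_of_pos hu.1]
    have hneg : IntegrableOn (fun u : ℝ => |u| ^ (-s)) (Set.Ioo (-1) 0) := by
      have := (Measure.measurePreserving_neg (volume : Measure ℝ)).integrableOn_comp_preimage
        (Homeomorph.neg ℝ).measurableEmbedding (f := fun u : ℝ => |u| ^ (-s)) (s := Set.Ioo 0 1)
      simpa [Function.comp_def] using this.2 hpos
    have hall : IntegrableOn (fun u : ℝ => |u| ^ (-s)) (Set.Ioo (-1) 1) := by
      have h0 : IntegrableOn (fun u : ℝ => |u| ^ (-s)) {0} := by
        rw [IntegrableOn, Measure.restrict_eq_zero.2 Real.volume_singleton]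
        exact integrable_zero_measure
      refine ((hneg.union h0).union hpos).mono_set ?_
      intro u hu
      rcases lt_trichotomy u 0 with h | h | h
      · exact Or.inl (Or.inl ⟨hu.1, h⟩)
      · exact Or.inl (Or.inr h)
      · exact Or.inr ⟨h, hu.2⟩
    rw [lintegral_indicator measurableSet_Ioo]
    exact hall.lintegral_lt_top.ne
  have hle : gaussianReal 0 v ≤ ENNReal.ofReal (√(2 * Real.pi * v))⁻¹ • volume := by
    rw [gaussianReal_of_var_ne_zero _ hv, ← withDensity_const]
    refine withDensity_mono (Filter.Eventually.of_forall fun x => ?_)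
    refine ENNReal.ofReal_le_ofReal ?_
    rw [gaussianPDFReal]
    refine mul_le_of_le_one_right (by positivity) ?_
    rw [Real.exp_le_one_iff]
    exact div_nonpos_of_nonpos_of_nonneg (by nlinarith [sq_nonneg (x - 0)]) (by positivity)
  refine ⟨1 + ENNReal.ofReal (√(2 * Real.pi * v))⁻¹ * ∫⁻ u, h u, ?_, fun b => ?_⟩
  · exact ENNReal.add_ne_top.2 ⟨ENNReal.one_ne_top, ENNReal.mul_ne_top ENNReal.ofReal_ne_top hfin⟩
  calc ∫⁻ t, ENNReal.ofReal (|t - b| ^ (-s)) ∂(gaussianReal 0 v)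
      ≤ ∫⁻ t, (1 + h (t - b)) ∂(gaussianReal 0 v) := by
        refine lintegral_mono fun t => ?_
        by_cases ht : t - b ∈ Set.Ioo (-1 : ℝ) 1
        · simp only [h, Set.indicator_of_mem ht]
          exact le_add_self
        · refine le_add_right ?_
          rw [← ENNReal.ofReal_one]
          refine ENNReal.ofReal_le_ofReal (Real.rpow_le_one_of_one_le_of_nonpos ?_ (by linarith))
          by_contra! hlt
          exact ht (abs_lt.1 hlt)
    _ = 1 + ∫⁻ t, h (t - b) ∂(gaussianReal 0 v) := by
        rw [lintegral_add_left measurable_const]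
        simp
    _ ≤ 1 + ∫⁻ t, h (t - b) ∂(ENNReal.ofReal (√(2 * Real.pi * v))⁻¹ • volume) := by
        gcongr
    _ = _ := by
        rw [lintegral_smul_measure, lintegral_sub_right_eq_self h b, smul_eq_mul]

/-- The inverse square norm has a finite Gaussian expectation in dimension at least `3`, bounded
uniformly in the centre `b`. By the AM-GM inequality `1 / ‖x - b‖²` is at most
`∏ j, |x j - b j| ^ (-2 / d)`, whose expectation factorises. -/
lemma exists_lintegral_inv_le {d : ℕ} (hd : 3 ≤ d) {v : NNReal} (hv : v ≠ 0) :
    ∃ C : ENNReal, C ≠ ⊤ ∧ ∀ b : Fin d → ℝ,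
      ∫⁻ x, ENNReal.ofReal (1 / ∑ j, (x j - b j) ^ 2)
        ∂(Measure.pi fun _ : Fin d => gaussianReal 0 v) ≤ C := by
  have hd' : (3 : ℝ) ≤ d := by exact_mod_cast hd
  obtain ⟨C, hC, hb⟩ := exists_lintegral_abs_rpow_le hv (s := 2 / d) (by positivity)
    (by rw [div_lt_one (by positivity)]; linarith)
  have := nullSingletonClass_gaussianReal (μ := 0) hv
  refine ⟨∏ _j : Fin d, C, ENNReal.prod_ne_top fun _ _ => hC, fun b => ?_⟩
  let μ := Measure.pi fun _ : Fin d => gaussianReal 0 v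
  let F : Fin d → ℝ → ENNReal := fun j t => ENNReal.ofReal (|t - b j| ^ (-(2 / d) : ℝ))
  have hF : ∀ j, Measurable (F j) := fun j => by fun_prop
  have hne : ∀ᵐ x ∂μ, ∀ j, x j ≠ b j := by
    rw [ae_all_iff]
    intro j
    exact Measure.ae_eval_ne (μ := fun _ : Fin d => gaussianReal 0 v) j (b j)
  calc ∫⁻ x, ENNReal.ofReal (1 / ∑ j, (x j - b j) ^ 2) ∂μ
      ≤ ∫⁻ x, ∏ j, F j (x j) ∂μ := by
        refine lintegral_mono_ae ?_
        filter_upwards [hne] with x hx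
        simp only [F]
        rw [← ENNReal.ofReal_prod_of_nonneg (fun _ _ => by positivity)]
        refine ENNReal.ofReal_le_ofReal ?_
        have hpos : ∀ j, 0 < |x j - b j| := fun j => abs_pos.2 (sub_ne_zero.2 (hx j))
        have hamgm := Real.geom_mean_le_arith_mean_weighted Finset.univ
          (fun _ : Fin d => (1 / d : ℝ)) (fun j => (x j - b j) ^ 2) (fun _ _ => by positivity)
          (by simp; field_simp) (fun _ _ => by positivity)
        have hle : ∑ j, (1 / d : ℝ) * (x j - b j) ^ 2 ≤ ∑ j, (x j - b j) ^ 2 := by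
          refine Finset.sum_le_sum fun j _ => ?_
          refine mul_le_of_le_one_left (by positivity) ?_
          rw [div_le_one (by positivity)]
          linarith
        have heq : ∀ j, |x j - b j| ^ (-(2 / d) : ℝ) = (((x j - b j) ^ 2) ^ (1 / d : ℝ))⁻¹ := by
          intro j
          rw [Real.rpow_neg (abs_nonneg _), ← sq_abs, ← Real.rpow_natCast,
            ← Real.rpow_mul (abs_nonneg _)]
          congr 2
          push_cast
          ring
        simp_rw [heq]
        rw [Finset.prod_inv_distrib, one_div]
        refine inv_anti₀ (Finset.prod_pos fun j _ => ?_) (hamgm.trans hle)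
        have : 0 < (x j - b j) ^ 2 := by rw [← sq_abs]; exact pow_pos (hpos j) 2
        positivity
    _ = ∏ j, ∫⁻ x, F j (x j) ∂μ := by
        have hind : iIndepFun (fun (j : Fin d) (x : Fin d → ℝ) => F j (x j)) μ :=
          iIndepFun_pi fun j => (hF j).aemeasurable
        exact lintegral_prod_eq_prod_lintegral_of_indepFun Finset.univ _ hind
          fun j => (hF j).comp (measurable_pi_apply j)
    _ ≤ ∏ _j : Fin d, C := by
        refine Finset.prod_le_prod' fun j _ => ?_
        have hm := measurePreserving_eval (fun _ : Fin d => gaussianReal 0 v) j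
        calc ∫⁻ x, F j (x j) ∂μ = ∫⁻ t, F j t ∂(gaussianReal 0 v) := hm.lintegral_comp (hF j)
          _ ≤ C := hb (b j)

/-! ### Stein's identity -/

/-- Stein's identity `E[t g(t)] = v E[g'(t)]` for a centred real Gaussian of variance `v` and bounded
`g`, `g'`, by integration by parts against its density. -/
lemma stein_gaussianReal {v : NNReal} (hv : v ≠ 0) {g g' : ℝ → ℝ} {C : ℝ}
    (hg : ∀ t, HasDerivAt g (g' t) t) (hg' : Measurable g')
    (hC : ∀ t, |g t| ≤ C) (hC' : ∀ t, |g' t| ≤ C) :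
    ∫ t, t * g t ∂(gaussianReal 0 v) = v * ∫ t, g' t ∂(gaussianReal 0 v) := by
  have hv' : (v : ℝ) ≠ 0 := by exact_mod_cast hv
  have hgm : Measurable g := (continuous_iff_continuousAt.2 fun t => (hg t).continuousAt).measurable
  let φ := gaussianPDFReal 0 v
  have hφi : Integrable φ := integrable_gaussianPDFReal 0 v
  have hφ : ∀ t, HasDerivAt φ (-(t / v) * φ t) t := by
    intro t
    have h1 : HasDerivAt (fun x : ℝ => -(x - 0) ^ 2 / (2 * (v : ℝ))) (-(t / v)) t := by
      have := (((hasDerivAt_id t).sub_const 0).pow 2).neg.div_const (2 * (v : ℝ))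
      refine this.congr_deriv ?_
      simp
      field_simp
    refine (h1.exp.const_mul (√(2 * Real.pi * v))⁻¹).congr_deriv ?_
    simp only [φ, gaussianPDFReal]
    ring
  have htφ : Integrable fun t => -(t / v) * φ t := by
    have h1 : Integrable (fun t : ℝ => t) (gaussianReal 0 v) :=
      (memLp_id_gaussianReal (μ := 0) (v := v) 1).integrable le_rfl
    rw [gaussianReal_of_var_ne_zero _ hv, integrable_withDensity_iff_integrable_smul'
      (measurable_gaussianPDF _ _) (Filter.Eventually.of_forall fun _ => gaussianPDF_lt_top)] at h1
    refine (h1.const_mul (-(1 / v : ℝ))).congr (Filter.Eventually.of_forall fun t => ?_)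
    simp only [toReal_gaussianPDF, smul_eq_mul, φ]
    ring
  have key := integral_mul_deriv_eq_deriv_mul_of_integrable (fun t _ => hg t) (fun t _ => hφ t)
    (htφ.bdd_mul hgm.aestronglyMeasurable (Filter.Eventually.of_forall hC))
    (hφi.bdd_mul hg'.aestronglyMeasurable (Filter.Eventually.of_forall hC'))
    (hφi.bdd_mul hgm.aestronglyMeasurable (Filter.Eventually.of_forall hC))
  rw [integral_gaussianReal_eq_integral_smul hv, integral_gaussianReal_eq_integral_smul hv]
  have e1 : ∫ t, gaussianPDFReal 0 v t • (t * g t)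
      = -(v : ℝ) * ∫ t, g t * (-(t / v) * φ t) := by
    rw [← integral_const_mul]
    refine integral_congr_ae (Filter.Eventually.of_forall fun t => ?_)
    simp only [smul_eq_mul, φ]
    field_simp
  rw [e1, key]
  simp only [smul_eq_mul, φ, mul_comm]
  ring

/-- The one-dimensional slice of Stein's identity for the field `y / ‖y‖²`; here `r` is the
contribution of the other coordinates to the square norm. -/
lemma stein_slice {v : NNReal} (hv : v ≠ 0) (b : ℝ) {r : ℝ} (hr : 0 < r) :
    ∫ t, t * ((t - b) / ((t - b) ^ 2 + r)) ∂(gaussianReal 0 v)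
      = v * ∫ t, (1 / ((t - b) ^ 2 + r) - 2 * (t - b) ^ 2 / ((t - b) ^ 2 + r) ^ 2)
          ∂(gaussianReal 0 v) := by
  have hq : ∀ t : ℝ, 0 < (t - b) ^ 2 + r := fun t => by positivity
  refine stein_gaussianReal hv (C := 1 + 1 / r) (fun t => ?_) (by fun_prop) (fun t => ?_)
    (fun t => ?_)
  · have h1 := (hasDerivAt_id t).sub_const b
    refine (h1.div ((h1.pow 2).add_const r) (hq t).ne').congr_deriv ?_
    have := (hq t).ne'
    simp
    field_simp
  · rw [abs_div, abs_of_pos (hq t), div_le_iff₀ (hq t)]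
    have h2 : |t - b| ≤ 1 + (t - b) ^ 2 := by
      rw [← sq_abs (t - b)]; nlinarith [sq_nonneg (|t - b| - 1), abs_nonneg (t - b)]
    have h3 : (1 + 1 / r) * ((t - b) ^ 2 + r) = 1 + (t - b) ^ 2 + ((t - b) ^ 2 / r + r) := by
      field_simp; ring
    rw [h3]
    have : 0 ≤ (t - b) ^ 2 / r + r := by positivity
    linarith
  · have h1 : 1 / ((t - b) ^ 2 + r) - 2 * (t - b) ^ 2 / ((t - b) ^ 2 + r) ^ 2
        = (r - (t - b) ^ 2) / ((t - b) ^ 2 + r) ^ 2 := by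
      have := (hq t).ne'
      field_simp
      ring
    have h2 : |(r - (t - b) ^ 2) / ((t - b) ^ 2 + r) ^ 2| ≤ 1 / ((t - b) ^ 2 + r) := by
      rw [abs_div, abs_of_pos (pow_pos (hq t) 2), div_le_div_iff₀ (pow_pos (hq t) 2) (hq t)]
      have : |r - (t - b) ^ 2| ≤ (t - b) ^ 2 + r := by
        rw [abs_le]; constructor <;> nlinarith [sq_nonneg (t - b)]
      nlinarith [hq t]
    have h3 : 1 / ((t - b) ^ 2 + r) ≤ 1 / r :=
      one_div_le_one_div_of_le hr (by nlinarith [sq_nonneg (t - b)])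
    rw [h1]
    linarith

/-- Stein's identity in one coordinate for `y / ‖y‖²` with `y = x - b`, in dimension at least `2`:
for almost every value of the other coordinates the slice is free of singularities. -/
lemma stein_coord_s4 {n : ℕ} (hn : 1 ≤ n) {v : NNReal} (hv : v ≠ 0) (b : Fin (n + 1) → ℝ)
    (i : Fin (n + 1))
    (h1 : Integrable (fun x : Fin (n + 1) → ℝ => x i * ((x i - b i) / ∑ j, (x j - b j) ^ 2))
      (Measure.pi fun _ => gaussianReal 0 v))
    (h2 : Integrable (fun x : Fin (n + 1) → ℝ => 1 / ∑ j, (x j - b j) ^ 2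
        - 2 * (x i - b i) ^ 2 / (∑ j, (x j - b j) ^ 2) ^ 2)
      (Measure.pi fun _ => gaussianReal 0 v)) :
    ∫ x, x i * ((x i - b i) / ∑ j, (x j - b j) ^ 2)
        ∂(Measure.pi fun _ : Fin (n + 1) => gaussianReal 0 v)
      = v * ∫ x, (1 / ∑ j, (x j - b j) ^ 2 - 2 * (x i - b i) ^ 2 / (∑ j, (x j - b j) ^ 2) ^ 2)
        ∂(Measure.pi fun _ : Fin (n + 1) => gaussianReal 0 v) := by
  have := nullSingletonClass_gaussianReal (μ := 0) hv
  have mp := (measurePreserving_piFinSuccAbove (fun _ : Fin (n + 1) => gaussianReal 0 v) i).symm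
  rw [← mp.integrable_comp_emb (MeasurableEquiv.measurableEmbedding _)] at h1 h2
  rw [← mp.integral_comp', ← mp.integral_comp']
  simp only [Function.comp_def, Fin.sum_univ_succAbove _ i, MeasurableEquiv.piFinSuccAbove_symm_apply,
    Fin.insertNthEquiv_apply, Fin.insertNth_apply_same, Fin.insertNth_apply_succAbove] at h1 h2 ⊢
  rw [integral_prod_symm _ h1, integral_prod_symm _ h2, ← integral_const_mul]
  let j₀ : Fin n := ⟨0, hn⟩
  have hne : ∀ᵐ y ∂(Measure.pi fun _ : Fin n => gaussianReal 0 v), y j₀ ≠ b (i.succAbove j₀) :=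
    Measure.ae_eval_ne (μ := fun _ : Fin n => gaussianReal 0 v) j₀ _
  refine integral_congr_ae ?_
  filter_upwards [hne] with y hy
  refine stein_slice hv (b i) ?_
  exact Finset.sum_pos' (fun _ _ => by positivity)
    ⟨j₀, Finset.mem_univ _, by have := sub_ne_zero.2 hy; positivity⟩

/-- The pointwise domination that makes the cross term integrable: with `a = x i` and `y = x - b`,
both `x i ^ 2` and `1 / ‖y‖²` are. -/
lemma abs_mul_div_le {d : ℕ} (a : ℝ) (y : Fin d → ℝ) (i : Fin d) :
    |a * (y i / ∑ j, y j ^ 2)| ≤ a ^ 2 + 1 / ∑ j, y j ^ 2 := by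
  have hle : y i ^ 2 ≤ ∑ j, y j ^ 2 :=
    Finset.single_le_sum (f := fun j => y j ^ 2) (fun _ _ => by positivity) (Finset.mem_univ i)
  rcases (show 0 ≤ ∑ j, y j ^ 2 by positivity).eq_or_lt with h | h
  · rw [← h]; simp; positivity
  · have : (y i / ∑ j, y j ^ 2) ^ 2 ≤ 1 / ∑ j, y j ^ 2 := by
      rw [div_pow, div_le_div_iff₀ (by positivity) h]
      nlinarith
    rw [abs_le]
    constructor <;> nlinarith [sq_nonneg (a - y i / ∑ j, y j ^ 2),
      sq_nonneg (a + y i / ∑ j, y j ^ 2), sq_nonneg a, sq_nonneg (y i / ∑ j, y j ^ 2)]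

lemma integrable_inv_pi {d : ℕ} (hd : 3 ≤ d) {v : NNReal} (hv : v ≠ 0) (b : Fin d → ℝ) :
    Integrable (fun x : Fin d → ℝ => 1 / ∑ j, (x j - b j) ^ 2)
      (Measure.pi fun _ => gaussianReal 0 v) := by
  obtain ⟨C, hC, h⟩ := exists_lintegral_inv_le hd hv
  refine (lintegral_ofReal_ne_top_iff_integrable
    (Measurable.aestronglyMeasurable (by fun_prop)) ?_).1 (ne_top_of_le_ne_top hC (h b))
  exact Filter.Eventually.of_forall fun x => by positivity

lemma integrable_sq_pi {d : ℕ} (v : NNReal) (i : Fin d) :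
    Integrable (fun x : Fin d → ℝ => x i ^ 2) (Measure.pi fun _ => gaussianReal 0 v) := by
  have h : Integrable (fun t : ℝ => t ^ 2) (gaussianReal 0 v) :=
    (memLp_id_gaussianReal (μ := 0) (v := v) 2).integrable_sq
  exact (measurePreserving_eval (fun _ : Fin d => gaussianReal 0 v) i).integrable_comp_of_integrable h

lemma integral_sq_pi {d : ℕ} (v : NNReal) (i : Fin d) :
    ∫ x : Fin d → ℝ, x i ^ 2 ∂(Measure.pi fun _ => gaussianReal 0 v) = v := by
  have hm := measurePreserving_eval (fun _ : Fin d => gaussianReal 0 v) i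
  have h1 : ∫ t, t ^ 2 ∂(gaussianReal 0 v) = v := by
    have := variance_fun_id_gaussianReal (μ := 0) (v := v)
    rwa [variance_of_integral_eq_zero (by fun_prop) (by simp)] at this
  have h2 := integral_map (μ := Measure.pi fun _ : Fin d => gaussianReal 0 v)
    (f := fun t : ℝ => t ^ 2) hm.measurable.aemeasurable
    (Measurable.aestronglyMeasurable (by fun_prop))
  rw [hm.map_eq, h1] at h2
  exact h2.symm

/-- Stein's identity for the vector field `(x - b) / ‖x - b‖²`, whose divergence is
`(d - 2) / ‖x - b‖²`. -/
lemma stein_pi {d : ℕ} (hd : 3 ≤ d) {v : NNReal} (hv : v ≠ 0) (b : Fin d → ℝ) :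
    ∫ x, ∑ i, x i * ((x i - b i) / ∑ j, (x j - b j) ^ 2)
        ∂(Measure.pi fun _ : Fin d => gaussianReal 0 v)
      = v * (d - 2) * ∫ x, 1 / ∑ j, (x j - b j) ^ 2
        ∂(Measure.pi fun _ : Fin d => gaussianReal 0 v) := by
  have hI := integrable_inv_pi hd hv b
  have h1 : ∀ i, Integrable (fun x : Fin d → ℝ => x i * ((x i - b i) / ∑ j, (x j - b j) ^ 2))
      (Measure.pi fun _ => gaussianReal 0 v) := fun i =>
    ((integrable_sq_pi v i).add hI).mono' (Measurable.aestronglyMeasurable (by fun_prop))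
      (Filter.Eventually.of_forall fun x => abs_mul_div_le (x i) (fun j => x j - b j) i)
  have h2 : ∀ i, Integrable (fun x : Fin d → ℝ =>
      2 * (x i - b i) ^ 2 / (∑ j, (x j - b j) ^ 2) ^ 2)
      (Measure.pi fun _ => gaussianReal 0 v) := fun i => by
    refine (hI.const_mul 2).mono' (Measurable.aestronglyMeasurable (by fun_prop))
      (Filter.Eventually.of_forall fun x => ?_)
    have hle : (x i - b i) ^ 2 ≤ ∑ j, (x j - b j) ^ 2 :=
      Finset.single_le_sum (f := fun j => (x j - b j) ^ 2) (fun _ _ => by positivity)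
        (Finset.mem_univ i)
    rw [Real.norm_of_nonneg (by positivity)]
    rcases (show 0 ≤ ∑ j, (x j - b j) ^ 2 by positivity).eq_or_lt with h | h
    · rw [← h]; simp
    · rw [mul_one_div, div_le_div_iff₀ (by positivity) h]
      nlinarith
  obtain ⟨n, rfl⟩ : ∃ n, d = n + 1 := ⟨d - 1, by omega⟩
  rw [integral_finsetSum _ fun i _ => h1 i,
    Finset.sum_congr rfl fun i _ => stein_coord_s4 (by omega) hv b i (h1 i) (hI.sub (h2 i)),
    ← Finset.mul_sum, mul_assoc, ← integral_const_mul]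
  congr 1
  refine (integral_finsetSum _ fun i _ => hI.sub (h2 i)).symm.trans ?_
  congr 1
  ext x
  simp only [Pi.sub_apply]
  rw [Finset.sum_sub_distrib, ← Finset.sum_div _ (fun i => 2 * (x i - b i) ^ 2), ← Finset.mul_sum]
  simp only [Finset.sum_const, Finset.card_univ, Fintype.card_fin, nsmul_eq_mul]
  -- The zero of `x - b` needs no exclusion: there all quotients are `0`.
  have hq : 2 * (∑ j, (x j - b j) ^ 2) / (∑ j, (x j - b j) ^ 2) ^ 2
      = 2 * (1 / ∑ j, (x j - b j) ^ 2) := by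
    rcases eq_or_ne (∑ j, (x j - b j) ^ 2) 0 with h | h
    · simp [h]
    · field_simp
  rw [hq]
  ring

/-! ### The joint law -/

/-- A Gaussian law with covariance `τ ^ 2 • 1` is a product of one-dimensional Gaussians, whichever
square root `A` of the covariance represents it: both characteristic functions at a linear form
with coefficient vector `l` are `exp (-τ² ‖l‖² / 2)`. -/
lemma IsGaussianLaw.eq_pi {d : ℕ} {τ : ℝ} {v : NNReal} (hv : (v : ℝ) = τ ^ 2)
    {μ : Measure (Fin d → ℝ)}
    (h : IsGaussianLaw μ 0 (τ ^ 2 • (1 : Matrix (Fin d) (Fin d) ℝ))) :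
    μ = Measure.pi fun _ => gaussianReal 0 v := by
  obtain ⟨A, hA, rfl⟩ := h
  let T : (Fin d → ℝ) →L[ℝ] (Fin d → ℝ) := A.mulVecLin.toContinuousLinearMap
  have hT : (fun x => 0 + A.mulVec x) = T := by ext x; simp [T]
  have hone : ∀ (w : NNReal) (L : StrongDual ℝ ℝ),
      charFunDual (gaussianReal 0 w) L = Complex.exp (-(w * (L 1) ^ 2 / 2 : ℝ)) := by
    intro w L
    rw [charFunDual_eq_charFun_map_one, gaussianReal_map_continuousLinearMap, charFun_gaussianReal]
    congr 1
    simp [max_eq_left (sq_nonneg (L 1))]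
    ring
  rw [hT]
  unfold _root_.stdGaussian
  have : IsProbabilityMeasure (Measure.map T (Measure.pi fun _ : Fin d => gaussianReal 0 1)) :=
    Measure.isProbabilityMeasure_map (by fun_prop)
  refine Measure.ext_of_charFunDual ?_
  ext L
  rw [charFunDual_map, charFunDual_pi, charFunDual_pi]
  simp_rw [hone]
  rw [← Complex.exp_sum, ← Complex.exp_sum]
  congr 1
  norm_cast
  let l : Fin d → ℝ := fun j => L (Pi.single j 1)
  have hL : ∀ x : Fin d → ℝ, L x = x ⬝ᵥ l := by
    intro x
    conv_lhs => rw [pi_eq_sum_univ' x]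
    simp [map_sum, dotProduct, l]
  have hquad : (l ᵥ* A) ⬝ᵥ (l ᵥ* A) = τ ^ 2 * (l ⬝ᵥ l) := by
    rw [← mulVec_transpose, dotProduct_comm, dotProduct_mulVec, mulVec_transpose, vecMul_vecMul, hA]
    simp [vecMul_smul, dotProduct_comm]
  have e1 : ∀ i, (L.comp T) (Pi.single i 1) = (l ᵥ* A) i := by
    intro i
    simp [T, hL, vecMul, dotProduct_comm]
    rfl
  have e2 : ∑ i, ((l ᵥ* A) i) ^ 2 = τ ^ 2 * ∑ i, l i ^ 2 := by
    simpa [dotProduct, pow_two] using hquad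
  calc _ = ∑ i, -(1 * (l ᵥ* A) i ^ 2 / 2) := Finset.sum_congr rfl fun i _ => by
        rw [← e1 i]; rfl
    _ = -((∑ i, (l ᵥ* A) i ^ 2) / 2) := by
        simp only [one_mul, Finset.sum_neg_distrib, Finset.sum_div]
    _ = ∑ i, -(v * l i ^ 2 / 2) := by
        rw [e2, hv, Finset.sum_neg_distrib, ← Finset.sum_div, ← Finset.mul_sum]
    _ = _ := rfl

/-- Integrability over a random centre `y + η` of arbitrary law `ν`: the bound in
`exists_lintegral_inv_le` is uniform in the centre. -/
lemma integrable_inv_prod {d : ℕ} (hd : 3 ≤ d) {v : NNReal} (hv : v ≠ 0) (η : Fin d → ℝ)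
    (ν : Measure (Fin d → ℝ)) [IsProbabilityMeasure ν] :
    Integrable (fun p : (Fin d → ℝ) × (Fin d → ℝ) => 1 / ∑ j, (p.1 j - (p.2 j + η j)) ^ 2)
      ((Measure.pi fun _ => gaussianReal 0 v).prod ν) := by
  obtain ⟨C, hC, h⟩ := exists_lintegral_inv_le hd hv
  refine (lintegral_ofReal_ne_top_iff_integrable
    (Measurable.aestronglyMeasurable (by fun_prop)) ?_).1 ?_
  · exact Filter.Eventually.of_forall fun x => by positivity
  · refine ne_top_of_le_ne_top hC ?_
    rw [lintegral_prod_symm _ (by fun_prop)]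
    refine (lintegral_mono fun y => h (y + η)).trans ?_
    simp

/-- Stein's identity averaged over an independent random centre `y + η`. -/
lemma stein_prod {d : ℕ} (hd : 3 ≤ d) {v : NNReal} (hv : v ≠ 0) (η : Fin d → ℝ)
    (ν : Measure (Fin d → ℝ)) [IsProbabilityMeasure ν] :
    Integrable (fun p : (Fin d → ℝ) × (Fin d → ℝ) => ∑ i, p.1 i *
        ((p.1 i - (p.2 i + η i)) / ∑ j, (p.1 j - (p.2 j + η j)) ^ 2))
      ((Measure.pi fun _ => gaussianReal 0 v).prod ν) ∧
    ∫ p, ∑ i, p.1 i * ((p.1 i - (p.2 i + η i)) / ∑ j, (p.1 j - (p.2 j + η j)) ^ 2)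
        ∂((Measure.pi fun _ : Fin d => gaussianReal 0 v).prod ν)
      = v * (d - 2) * ∫ p, 1 / ∑ j, (p.1 j - (p.2 j + η j)) ^ 2
        ∂((Measure.pi fun _ : Fin d => gaussianReal 0 v).prod ν) := by
  have hI := integrable_inv_prod hd hv η ν
  have h1 : Integrable (fun p : (Fin d → ℝ) × (Fin d → ℝ) => ∑ i, p.1 i *
        ((p.1 i - (p.2 i + η i)) / ∑ j, (p.1 j - (p.2 j + η j)) ^ 2))
      ((Measure.pi fun _ => gaussianReal 0 v).prod ν) := by
    refine integrable_finsetSum _ fun i _ => ?_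
    exact (((integrable_sq_pi v i).comp_fst ν).add hI).mono'
      (Measurable.aestronglyMeasurable (by fun_prop))
      (Filter.Eventually.of_forall fun p =>
        abs_mul_div_le (p.1 i) (fun j => p.1 j - (p.2 j + η j)) i)
  refine ⟨h1, ?_⟩
  rw [integral_prod_symm _ h1, integral_prod_symm _ hI, ← integral_const_mul]
  exact integral_congr_ae (Filter.Eventually.of_forall fun y => stein_pi hd hv (y + η))

/-! ### The risk identity -/

/-- Exact risk identity in the proof of Lemma 1 of the paper: for independent
`ξ₁ ~ N(0, τ² I_d)`, `ξ₂ ~ N(0, σ² I_d)` in `ℝ^d`, `d ≥ 3`, `X = ξ₁ - ξ₂ - η`,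
`ω̂ = γ τ² / ‖X‖²` and `Z = ξ₁ - ω̂ X`,
`E[‖Z‖²] = d τ² - γ τ⁴ (2(d-2) - γ) E[1 / ‖X‖²]`. -/
theorem stmt_4 {Ω₀ : Type*} [MeasurableSpace Ω₀] (Pr : Measure Ω₀)
    [IsProbabilityMeasure Pr] {d : ℕ} (hd : 3 ≤ d) (γ : ℝ)
    (τ σ : ℝ) (hτ : 0 < τ) (hσ : 0 < σ) (η : Fin d → ℝ)
    (ξ₁ ξ₂ : Ω₀ → Fin d → ℝ) (hm1 : Measurable ξ₁) (hm2 : Measurable ξ₂)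
    (hlaw1 : IsGaussianLaw (Measure.map ξ₁ Pr) 0
      (τ ^ 2 • (1 : Matrix (Fin d) (Fin d) ℝ)))
    (hlaw2 : IsGaussianLaw (Measure.map ξ₂ Pr) 0
      (σ ^ 2 • (1 : Matrix (Fin d) (Fin d) ℝ)))
    (hindep : IndepFun ξ₁ ξ₂ Pr) :
    ∀ X : Ω₀ → Fin d → ℝ, X = (fun ω => ξ₁ ω - ξ₂ ω - η) →
      ∀ Z : Ω₀ → Fin d → ℝ,
        Z = (fun ω => ξ₁ ω - (γ * τ ^ 2 / (X ω ⬝ᵥ X ω)) • X ω) →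
        ∫ ω, Z ω ⬝ᵥ Z ω ∂Pr
          = (d : ℝ) * τ ^ 2
            - γ * τ ^ 4 * (2 * ((d : ℝ) - 2) - γ) * ∫ ω, 1 / (X ω ⬝ᵥ X ω) ∂Pr := by
  rintro X rfl Z rfl
  obtain ⟨v, hvτ⟩ : ∃ v : NNReal, (v : ℝ) = τ ^ 2 := ⟨_, Real.coe_toNNReal _ (sq_nonneg τ)⟩
  have hv : v ≠ 0 := by
    rintro rfl
    exact (pow_pos hτ 2).ne hvτ
  let μ : Measure (Fin d → ℝ) := Measure.pi fun _ => gaussianReal 0 v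
  let ν : Measure (Fin d → ℝ) := Measure.map ξ₂ Pr
  have hν : IsProbabilityMeasure ν := Measure.isProbabilityMeasure_map hm2.aemeasurable
  have hlaw : Measure.map (fun ω => (ξ₁ ω, ξ₂ ω)) Pr = μ.prod ν := by
    rw [(indepFun_iff_map_prod_eq_prod_map_map hm1.aemeasurable hm2.aemeasurable).1 hindep,
      hlaw1.eq_pi hvτ]
  let q : (Fin d → ℝ) × (Fin d → ℝ) → ℝ := fun p => ∑ j, (p.1 j - (p.2 j + η j)) ^ 2
  let s : (Fin d → ℝ) × (Fin d → ℝ) → ℝ := fun p =>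
    ∑ i, p.1 i * ((p.1 i - (p.2 i + η i)) / q p)
  have hq : ∀ ω, (ξ₁ ω - ξ₂ ω - η) ⬝ᵥ (ξ₁ ω - ξ₂ ω - η) = q (ξ₁ ω, ξ₂ ω) := by
    intro ω
    simp only [dotProduct, q, Pi.sub_apply]
    exact Finset.sum_congr rfl fun j _ => by ring
  let G : (Fin d → ℝ) × (Fin d → ℝ) → ℝ := fun p =>
    ∑ i, p.1 i ^ 2 - 2 * γ * τ ^ 2 * s p + γ ^ 2 * τ ^ 4 * (1 / q p)
  -- Expanding the square is valid even where `X = 0`, since then `ω̂ = 0`.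
  have hZ : ∀ ω, (ξ₁ ω - (γ * τ ^ 2 / q (ξ₁ ω, ξ₂ ω)) • (ξ₁ ω - ξ₂ ω - η)) ⬝ᵥ
      (ξ₁ ω - (γ * τ ^ 2 / q (ξ₁ ω, ξ₂ ω)) • (ξ₁ ω - ξ₂ ω - η))
      = G (ξ₁ ω, ξ₂ ω) := by
    intro ω
    have hs : s (ξ₁ ω, ξ₂ ω) = (ξ₁ ω ⬝ᵥ (ξ₁ ω - ξ₂ ω - η)) / q (ξ₁ ω, ξ₂ ω) := by
      simp only [s, dotProduct, Finset.sum_div, Pi.sub_apply]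
      exact Finset.sum_congr rfl fun j _ => by ring
    have hsq : ∑ i, ξ₁ ω i ^ 2 = ξ₁ ω ⬝ᵥ ξ₁ ω := by simp only [dotProduct, pow_two]
    simp only [G, sub_dotProduct (ξ₁ ω) (_ • _), dotProduct_sub _ (ξ₁ ω) (_ • _), smul_dotProduct,
      dotProduct_smul, smul_eq_mul, hq, hs, hsq,
      dotProduct_comm (ξ₁ ω - ξ₂ ω - η) (ξ₁ ω)]
    rcases eq_or_ne (q (ξ₁ ω, ξ₂ ω)) 0 with h | h
    · simp [h]
    · field_simp
      ring
  have htr : ∀ F : (Fin d → ℝ) × (Fin d → ℝ) → ℝ, Measurable F →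
      ∫ ω, F (ξ₁ ω, ξ₂ ω) ∂Pr = ∫ p, F p ∂(μ.prod ν) := by
    intro F hF
    rw [← hlaw, integral_map (hm1.prodMk hm2).aemeasurable hF.aestronglyMeasurable]
  obtain ⟨hsI, hs⟩ : Integrable s (μ.prod ν) ∧
      ∫ p, s p ∂(μ.prod ν) = v * (d - 2) * ∫ p, 1 / q p ∂(μ.prod ν) := stein_prod hd hv η ν
  have hqI : Integrable (fun p => 1 / q p) (μ.prod ν) := integrable_inv_prod hd hv η ν
  have hsqI : Integrable (fun x : Fin d → ℝ => ∑ i, x i ^ 2) μ :=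
    integrable_finsetSum _ fun i _ => integrable_sq_pi v i
  have hsq : ∫ p, ∑ i, p.1 i ^ 2 ∂(μ.prod ν) = d * τ ^ 2 := by
    rw [integral_fun_fst (f := fun x : Fin d → ℝ => ∑ i, x i ^ 2),
      integral_finsetSum _ fun i _ => integrable_sq_pi v i]
    rw [Finset.sum_congr rfl fun i _ => integral_sq_pi v i]
    simp [hvτ]
  have hG : ∫ p, G p ∂(μ.prod ν) = ∫ p, ∑ i, p.1 i ^ 2 ∂(μ.prod ν)
      - 2 * γ * τ ^ 2 * ∫ p, s p ∂(μ.prod ν) + γ ^ 2 * τ ^ 4 * ∫ p, 1 / q p ∂(μ.prod ν) := by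
    simp only [G]
    rw [← integral_const_mul, ← integral_const_mul,
      ← integral_sub (hsqI.comp_fst ν) (hsI.const_mul _)]
    exact integral_add ((hsqI.comp_fst ν).sub (hsI.const_mul _)) (hqI.const_mul _)
  simp only [hq]
  rw [integral_congr_ae (Filter.Eventually.of_forall hZ), htr G (by fun_prop),
    htr (fun p => 1 / q p) (by fun_prop), hG, hsq, hs, hvτ]
  ring
end

section
/- Let d ≥ 3 and let γ satisfy 0 < γ ≤ 2(d − 2). Define ω̂ := γ·τ² / ‖X‖² and Z := ξ₁ − ω̂ · X. Then E[‖Z‖²] ≤ d·τ² − γ·τ⁴·(2(d−2) − γ) / (ηᵀη + d·(σ² + τ²)). In particular E[‖Z‖²] ≤ d·τ², i.e. the risk of the shrinkage combination is no larger than the risk d·τ² of ξ₁ (the limiting cut posterior mean). -/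
/-!
Put `v = τ²`, `q = ‖X‖²` and regularise the shrinkage field as `X / (q + ε)` with `ε > 0`, which
is bounded with bounded derivative. Expanding the square, the cross term of
`Z_ε = ξ₁ - γ v X / (q + ε)` is evaluated by Stein's identity (`stein_real` in one dimension,
`stein_law` for the law `N(0, v I)`, `stein_indep` after averaging over `ξ₂`):
`E[ξ₁·X / (q + ε)] = v E[d / (q + ε) - 2 q / (q + ε)²]`. As `q / (q + ε)² ≤ 1 / (q + ε)`, this gives
`E‖Z_ε‖² ≤ d v - γ v² (2(d-2) - γ) E[1 / (q + ε)]`, and Jensen's inequality gives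
`E[1 / (q + ε)] ≥ 1 / (E q + ε)` with `E q = ‖η‖² + d (σ² + τ²)`; this is `risk_reg`.
Since `‖Z_ε‖² → ‖Z‖²` pointwise as `ε → 0`, Fatou's lemma yields the bound for `Z`. Applying the
inequalities before the limit means that neither the integrability of `1 / ‖X‖²` nor
`X ≠ 0` almost surely is needed.
-/

open Matrix MeasureTheory ProbabilityTheory

/-! ### Stein's identity for standard Gaussians -/

/-- One-dimensional Stein identity for the standard Gaussian, by integration by parts
against the density `φ`, whose derivative is `-t φ(t)`. -/
lemma stein_real_s5 {h h' : ℝ → ℝ} {C C' : ℝ} (hd : ∀ t, HasDerivAt h (h' t) t)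
    (hb : ∀ t, |h t| ≤ C) (hb' : ∀ t, |h' t| ≤ C') :
    ∫ t, t * h t ∂gaussianReal 0 1 = ∫ t, h' t ∂gaussianReal 0 1 := by
  set p : ℝ → ℝ := gaussianPDFReal 0 1 with hp
  have hpe : p = fun x => (√(2 * Real.pi))⁻¹ * Real.exp (-(1 / 2) * x ^ 2) := by
    ext x
    simp only [hp, gaussianPDFReal]
    norm_num
    ring_nf
    trivial
  have hdp : ∀ t, HasDerivAt p (-(t * p t)) t := by
    intro t
    rw [hpe]
    have := (((hasDerivAt_pow 2 t).const_mul (-(1 / 2) : ℝ)).exp).const_mul (√(2 * Real.pi))⁻¹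
    refine this.congr_deriv ?_
    norm_num
    ring
  have hip : Integrable p := integrable_gaussianPDFReal 0 1
  have hitp : Integrable (fun t => t * p t) := by
    rw [hpe]
    have := (integrable_mul_exp_neg_mul_sq (b := 1 / 2) (by norm_num)).const_mul
      (√(2 * Real.pi))⁻¹
    refine this.congr (ae_of_all _ fun t => ?_)
    simp only
    ring
  have hmh : AEStronglyMeasurable h volume :=
    (continuous_iff_continuousAt.2 fun t => (hd t).continuousAt).aestronglyMeasurable
  have hmh' : AEStronglyMeasurable h' volume := by
    have : h' = deriv h := funext fun t => (hd t).deriv.symm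
    rw [this]
    exact (measurable_deriv h).aestronglyMeasurable
  have key := integral_mul_deriv_eq_deriv_mul_of_integrable (u := h) (u' := h') (v := p)
    (v' := fun t => -(t * p t)) (fun t _ => hd t) (fun t _ => hdp t)
    (hitp.neg.bdd_mul hmh (ae_of_all _ hb)) (hip.bdd_mul hmh' (ae_of_all _ hb'))
    (hip.bdd_mul hmh (ae_of_all _ hb))
  rw [integral_gaussianReal_eq_integral_smul one_ne_zero,
    integral_gaussianReal_eq_integral_smul one_ne_zero]
  simp only [smul_eq_mul]
  calc ∫ t, gaussianPDFReal 0 1 t * (t * h t) = - ∫ t, h t * -(t * p t) := by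
        rw [← integral_neg]
        congr 1 with t
        simp only [hp]
        ring
    _ = ∫ t, h' t * p t := by rw [key, neg_neg]
    _ = _ := by
        congr 1 with t
        ring

instance (m : ℕ) : IsProbabilityMeasure (_root_.stdGaussian m) := by
  unfold _root_.stdGaussian
  infer_instance

lemma integrable_eval_stdGaussian {m : ℕ} (j : Fin m) :
    Integrable (fun x : Fin m → ℝ => x j) (_root_.stdGaussian m) := by
  have : MemLp (id : ℝ → ℝ) 1 (gaussianReal 0 1) := memLp_id_gaussianReal 1
  exact integrable_comp_eval (i := j) (μ := fun _ : Fin m => gaussianReal 0 1)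
    (memLp_one_iff_integrable.1 this)

/-- Stein identity in the `j`-th coordinate of a standard Gaussian vector: condition on the
remaining coordinates and apply `stein_real`. -/
lemma stein_pi_s5 {m : ℕ} (j : Fin m) {G G' : (Fin m → ℝ) → ℝ} {C C' : ℝ}
    (hG : Measurable G) (hG' : Measurable G')
    (hd : ∀ x, HasDerivAt (fun s : ℝ => G (x + s • Pi.single j 1)) (G' x) 0)
    (hb : ∀ x, |G x| ≤ C) (hb' : ∀ x, |G' x| ≤ C') :
    ∫ x, x j * G x ∂_root_.stdGaussian m = ∫ x, G' x ∂_root_.stdGaussian m := by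
  obtain _ | n := m
  · exact j.elim0
  have mp := (measurePreserving_piFinSuccAbove
    (fun _ : Fin (n + 1) => gaussianReal 0 1) j).symm
  have hi1 : Integrable (fun x => x j * G x) (_root_.stdGaussian (n + 1)) :=
    (integrable_eval_stdGaussian j).mul_bdd hG.aestronglyMeasurable (ae_of_all _ hb)
  have hi2 : Integrable G' (_root_.stdGaussian (n + 1)) :=
    Integrable.of_bound hG'.aestronglyMeasurable C' (ae_of_all _ hb')
  unfold _root_.stdGaussian at hi1 hi2 ⊢
  rw [← mp.integral_comp', ← mp.integral_comp', integral_prod_symm, integral_prod_symm]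
  · congr 1 with y
    have hsymm : ∀ t : ℝ, (MeasurableEquiv.piFinSuccAbove (fun _ : Fin (n + 1) => ℝ) j).symm (t, y)
        = j.insertNth t y := fun t => rfl
    simp only [hsymm, Fin.insertNth_apply_same]
    refine stein_real_s5 (C := C) (C' := C') (fun t => ?_) (fun t => hb _) (fun t => hb' _)
    have h0 := hd (j.insertNth t y)
    have hshift : ∀ s : ℝ, (j.insertNth t y : Fin (n + 1) → ℝ) + s • Pi.single j 1
        = j.insertNth (t + s) y := by
      intro s
      ext i
      refine Fin.succAboveCases j ?_ (fun k => ?_) i <;> simp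
    simp only [hshift] at h0
    rw [← sub_self t] at h0
    have := h0.comp_sub_const t t
    simpa using this
  · exact mp.integrable_comp_of_integrable hi2
  · exact mp.integrable_comp_of_integrable hi1

/-! ### The regularised field `w / (‖w‖² + ε)` -/

lemma dot_self_nonneg {m : ℕ} (w : Fin m → ℝ) : 0 ≤ w ⬝ᵥ w :=
  Finset.sum_nonneg fun i _ => mul_self_nonneg (w i)

lemma dot_sq_le {m : ℕ} (a w : Fin m → ℝ) : (a ⬝ᵥ w) ^ 2 ≤ (a ⬝ᵥ a) * (w ⬝ᵥ w) := by
  have := Finset.sum_mul_sq_le_sq_mul_sq Finset.univ a w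
  simpa only [dotProduct, ← pow_two] using this

/-- The directional derivative along `a` of the regularised field `w ↦ a·w / (‖w‖² + ε)`. -/
lemma hasDerivAt_reg {m : ℕ} (a w : Fin m → ℝ) {ε : ℝ} (hε : 0 < ε) :
    HasDerivAt (fun s : ℝ => a ⬝ᵥ (w + s • a) / ((w + s • a) ⬝ᵥ (w + s • a) + ε))
      (a ⬝ᵥ a / (w ⬝ᵥ w + ε) - 2 * (a ⬝ᵥ w) ^ 2 / (w ⬝ᵥ w + ε) ^ 2) 0 := by
  have hpos : w ⬝ᵥ w + ε ≠ 0 := by have := dot_self_nonneg w; positivity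
  have h1 : HasDerivAt (fun s : ℝ => a ⬝ᵥ w + s * (a ⬝ᵥ a)) (a ⬝ᵥ a) 0 := by
    simpa using ((hasDerivAt_id (0 : ℝ)).mul_const (a ⬝ᵥ a)).const_add (a ⬝ᵥ w)
  have h2 : HasDerivAt (fun s : ℝ => w ⬝ᵥ w + s * (2 * (a ⬝ᵥ w)) + s ^ 2 * (a ⬝ᵥ a) + ε)
      (2 * (a ⬝ᵥ w)) 0 := by
    have := ((((hasDerivAt_id (0 : ℝ)).mul_const (2 * (a ⬝ᵥ w))).const_add (w ⬝ᵥ w)).add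
      ((hasDerivAt_pow 2 (0 : ℝ)).mul_const (a ⬝ᵥ a))).add_const ε
    refine this.congr_deriv ?_
    simp
  have h3 := h1.div h2 (by simpa using hpos)
  refine (h3.congr_of_eventuallyEq (Filter.Eventually.of_forall fun s => ?_)).congr_deriv ?_
  · simp only [dotProduct_add, add_dotProduct, dotProduct_smul, smul_dotProduct, smul_eq_mul,
      dotProduct_comm w a, Pi.div_apply]
    congr 1
    ring
  · simp only [zero_mul, add_zero, ne_eq, OfNat.ofNat_ne_zero, not_false_eq_true, zero_pow]
    field_simp

lemma reg_bound {m : ℕ} (a w : Fin m → ℝ) {ε : ℝ} (hε : 0 < ε) :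
    |a ⬝ᵥ w / (w ⬝ᵥ w + ε)| ≤ (a ⬝ᵥ a) / (2 * ε) + 1 / 2 := by
  have hq := dot_self_nonneg w
  have ha := dot_self_nonneg a
  have hc := dot_sq_le a w
  have h1 : |a ⬝ᵥ w| ≤ (a ⬝ᵥ a + w ⬝ᵥ w) / 2 := by
    apply abs_le_of_sq_le_sq _ (by positivity)
    nlinarith [sq_nonneg (a ⬝ᵥ a - w ⬝ᵥ w)]
  rw [abs_div, abs_of_pos (show 0 < w ⬝ᵥ w + ε by positivity), div_le_iff₀ (by positivity)]
  refine h1.trans ?_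
  have : (a ⬝ᵥ a / (2 * ε) + 1 / 2) * (w ⬝ᵥ w + ε)
      = (a ⬝ᵥ a + w ⬝ᵥ w) / 2 + (a ⬝ᵥ a * w ⬝ᵥ w / (2 * ε) + ε / 2) := by
    field_simp
    ring
  rw [this]
  have : 0 ≤ a ⬝ᵥ a * w ⬝ᵥ w / (2 * ε) + ε / 2 := by positivity
  linarith

lemma reg_deriv_bound {m : ℕ} (a w : Fin m → ℝ) {ε : ℝ} (hε : 0 < ε) :
    |a ⬝ᵥ a / (w ⬝ᵥ w + ε) - 2 * (a ⬝ᵥ w) ^ 2 / (w ⬝ᵥ w + ε) ^ 2| ≤ 3 * (a ⬝ᵥ a / ε) := by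
  have hq := dot_self_nonneg w
  have ha := dot_self_nonneg a
  have hc := dot_sq_le a w
  have h1 : a ⬝ᵥ a / (w ⬝ᵥ w + ε) ≤ a ⬝ᵥ a / ε := by gcongr; linarith
  have h2 : 2 * (a ⬝ᵥ w) ^ 2 / (w ⬝ᵥ w + ε) ^ 2 ≤ 2 * (a ⬝ᵥ a / (w ⬝ᵥ w + ε)) := by
    rw [div_le_iff₀ (by positivity)]
    have : 2 * (a ⬝ᵥ a / (w ⬝ᵥ w + ε)) * (w ⬝ᵥ w + ε) ^ 2
        = 2 * ((a ⬝ᵥ a) * (w ⬝ᵥ w + ε)) := by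
      field_simp
    rw [this]
    nlinarith
  have h3 : 0 ≤ a ⬝ᵥ a / (w ⬝ᵥ w + ε) := by positivity
  have h4 : 0 ≤ 2 * (a ⬝ᵥ w) ^ 2 / (w ⬝ᵥ w + ε) ^ 2 := by positivity
  rw [abs_le]
  constructor <;> linarith

/-! ### Stein's identity and moments for `N(0, v I)` -/

/-- The identity behind the risk formula: for `x ~ N(0, v I)` and a fixed centre `c`,
`E[x·w / (‖w‖² + ε)] = v E[div (w / (‖w‖² + ε))]` with `w = x - c`. Writing `x = A z`, the
coordinatewise identities for `z` are summed using `A Aᵀ = v I`. -/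
lemma stein_law {m : ℕ} {μ : Measure (Fin m → ℝ)} {v : ℝ}
    (hμ : IsGaussianLaw μ 0 (v • (1 : Matrix (Fin m) (Fin m) ℝ))) (c : Fin m → ℝ)
    {ε : ℝ} (hε : 0 < ε) :
    ∫ x, x ⬝ᵥ (x - c) / ((x - c) ⬝ᵥ (x - c) + ε) ∂μ
      = ∫ x, v * (m / ((x - c) ⬝ᵥ (x - c) + ε)
          - 2 * ((x - c) ⬝ᵥ (x - c)) / ((x - c) ⬝ᵥ (x - c) + ε) ^ 2) ∂μ := by
  obtain ⟨A, hA, rfl⟩ := hμ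
  have hmA : Measurable fun x : Fin m → ℝ => (0 : Fin m → ℝ) + A *ᵥ x := by
    unfold Matrix.mulVec dotProduct; fun_prop
  rw [integral_map hmA.aemeasurable (by
      apply Measurable.aestronglyMeasurable; unfold dotProduct; fun_prop),
    integral_map hmA.aemeasurable (by
      apply Measurable.aestronglyMeasurable; unfold dotProduct; fun_prop)]
  simp only [zero_add]
  let W : (Fin m → ℝ) → (Fin m → ℝ) := fun x => A *ᵥ x - c
  let G : Fin m → (Fin m → ℝ) → ℝ := fun j x => A.col j ⬝ᵥ W x / (W x ⬝ᵥ W x + ε)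
  let G' : Fin m → (Fin m → ℝ) → ℝ := fun j x =>
    A.col j ⬝ᵥ A.col j / (W x ⬝ᵥ W x + ε)
      - 2 * (A.col j ⬝ᵥ W x) ^ 2 / (W x ⬝ᵥ W x + ε) ^ 2
  have hW : Measurable W := by
    simp only [W]; unfold Matrix.mulVec dotProduct; fun_prop
  have hG : ∀ j, Measurable (G j) := fun j => by simp only [G]; unfold dotProduct; fun_prop
  have hG' : ∀ j, Measurable (G' j) := fun j => by simp only [G']; unfold dotProduct; fun_prop
  have hcol : ∀ x j, A.col j ⬝ᵥ W x = (Aᵀ *ᵥ W x) j := fun x j => rfl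
  have hst : ∀ j, ∫ x, x j * G j x ∂_root_.stdGaussian m = ∫ x, G' j x ∂_root_.stdGaussian m := by
    intro j
    refine stein_pi_s5 j (hG j) (hG' j) (fun x => ?_)
      (fun x => reg_bound _ _ hε) (fun x => reg_deriv_bound _ _ hε)
    have := hasDerivAt_reg (A.col j) (W x) hε
    have hs : ∀ s : ℝ, W (x + s • Pi.single j 1) = W x + s • A.col j := by
      intro s
      simp only [W, Matrix.mulVec_add, Matrix.mulVec_smul, Matrix.mulVec_single_one]
      abel
    simpa only [G, hs] using this
  have hi1 : ∀ j ∈ Finset.univ, Integrable (fun x => x j * G j x) (_root_.stdGaussian m) :=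
    fun j _ => (integrable_eval_stdGaussian j).mul_bdd (hG j).aestronglyMeasurable
      (ae_of_all _ fun x => reg_bound _ _ hε)
  have hi2 : ∀ j ∈ Finset.univ, Integrable (G' j) (_root_.stdGaussian m) := fun j _ =>
    Integrable.of_bound (hG' j).aestronglyMeasurable _ (ae_of_all _ fun x => reg_deriv_bound _ _ hε)
  have e1 : ∀ x, (A *ᵥ x) ⬝ᵥ (A *ᵥ x - c) / ((A *ᵥ x - c) ⬝ᵥ (A *ᵥ x - c) + ε)
      = ∑ j, x j * G j x := by
    intro x
    have : (A *ᵥ x) ⬝ᵥ W x = ∑ j, x j * (A.col j ⬝ᵥ W x) := by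
      simp only [hcol]
      change _ = x ⬝ᵥ (Aᵀ *ᵥ W x)
      rw [Matrix.dotProduct_mulVec, Matrix.vecMul_transpose]
    change (A *ᵥ x) ⬝ᵥ W x / (W x ⬝ᵥ W x + ε) = _
    rw [this, Finset.sum_div]
    exact Finset.sum_congr rfl fun j _ => mul_div_assoc _ _ _
  have e2 : ∀ x, v * (m / ((A *ᵥ x - c) ⬝ᵥ (A *ᵥ x - c) + ε)
          - 2 * ((A *ᵥ x - c) ⬝ᵥ (A *ᵥ x - c)) / ((A *ᵥ x - c) ⬝ᵥ (A *ᵥ x - c) + ε) ^ 2)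
      = ∑ j, G' j x := by
    intro x
    have t1 : ∑ j, A.col j ⬝ᵥ A.col j = v * m := by
      change Matrix.trace (Aᵀ * A) = _
      rw [Matrix.trace_mul_comm, hA]
      simp
    have t2 : ∑ j, (A.col j ⬝ᵥ W x) ^ 2 = v * (W x ⬝ᵥ W x) := by
      simp only [hcol, pow_two]
      change (Aᵀ *ᵥ W x) ⬝ᵥ (Aᵀ *ᵥ W x) = _
      rw [Matrix.dotProduct_mulVec, Matrix.vecMul_transpose, Matrix.mulVec_mulVec, hA]
      simp [Matrix.smul_mulVec]
    change v * (m / (W x ⬝ᵥ W x + ε) - 2 * (W x ⬝ᵥ W x) / (W x ⬝ᵥ W x + ε) ^ 2) = _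
    simp only [G']
    rw [Finset.sum_sub_distrib, ← Finset.sum_div, ← Finset.sum_div, ← Finset.mul_sum, t1, t2]
    ring
  simp only [e1, e2]
  rw [integral_finsetSum _ hi1, integral_finsetSum _ hi2]
  exact Finset.sum_congr rfl fun j _ => hst j

lemma gaussianLaw_eval {m : ℕ} {μ : Measure (Fin m → ℝ)} {v : ℝ}
    (hμ : IsGaussianLaw μ 0 (v • (1 : Matrix (Fin m) (Fin m) ℝ))) (i : Fin m) :
    MemLp (fun x : Fin m → ℝ => x i) 2 μ ∧ ∫ x, x i ∂μ = 0 ∧ ∫ x, x i ^ 2 ∂μ = v := by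
  obtain ⟨A, hA, rfl⟩ := hμ
  have hmA : Measurable fun x : Fin m → ℝ => (0 : Fin m → ℝ) + A *ᵥ x := by
    unfold Matrix.mulVec dotProduct; fun_prop
  have hL : ∀ j, MemLp (fun t : ℝ => A i j * t) 2 (gaussianReal 0 1) := fun j =>
    (memLp_id_gaussianReal 2).const_mul _
  have hL' : ∀ j, MemLp (fun x : Fin m → ℝ => A i j * x j) 2 (_root_.stdGaussian m) := fun j =>
    (hL j).comp_measurePreserving
      (measurePreserving_eval (fun _ : Fin m => gaussianReal 0 1) j)
  have hM : MemLp (fun x : Fin m → ℝ => (A *ᵥ x) i) 2 (_root_.stdGaussian m) := by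
    unfold Matrix.mulVec dotProduct
    exact memLp_finsetSum _ fun j _ => hL' j
  have h0 : ∫ x, (A *ᵥ x) i ∂_root_.stdGaussian m = 0 := by
    unfold Matrix.mulVec dotProduct
    rw [integral_finsetSum _ fun j _ => (hL' j).integrable (by norm_num)]
    refine Finset.sum_eq_zero fun j _ => ?_
    rw [integral_const_mul]
    have : ∫ x : Fin m → ℝ, x j ∂_root_.stdGaussian m = 0 := by
      have := integral_comp_eval (i := j) (μ := fun _ : Fin m => gaussianReal 0 1)
        (f := (id : ℝ → ℝ)) measurable_id.aestronglyMeasurable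
      simpa [_root_.stdGaussian] using this
    rw [this, mul_zero]
  have hV : ∫ x, (A *ᵥ x) i ^ 2 ∂_root_.stdGaussian m = v := by
    rw [← variance_of_integral_eq_zero hM.aemeasurable h0]
    have h1 : (fun x : Fin m → ℝ => (A *ᵥ x) i) = ∑ j, fun x : Fin m → ℝ => A i j * x j := by
      ext x
      simp [Matrix.mulVec, dotProduct]
    rw [h1, show _root_.stdGaussian m = Measure.pi fun _ => gaussianReal 0 1 from rfl,
      variance_sum_pi hL]
    have h2 : ∀ j, Var[fun t : ℝ => A i j * t; gaussianReal 0 1] = A i j * A i j := by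
      intro j
      have := variance_id_gaussianReal (μ := 0) (v := 1)
      rw [variance_const_mul]
      change _ * Var[id; gaussianReal 0 1] = _
      rw [this]
      simp [pow_two]
    simp only [h2]
    have := congrFun (congrFun hA i) i
    simpa [Matrix.mul_apply] using this
  refine ⟨?_, ?_, ?_⟩
  · rw [memLp_map_measure_iff (measurable_pi_apply i).aestronglyMeasurable hmA.aemeasurable]
    simpa [Function.comp_def] using hM
  · rw [integral_map hmA.aemeasurable (measurable_pi_apply i).aestronglyMeasurable]
    simpa using h0
  · rw [integral_map hmA.aemeasurable
      ((measurable_pi_apply i).pow_const 2).aestronglyMeasurable]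
    simpa using hV

lemma gaussianLaw_coord {Ω₀ : Type*} [MeasurableSpace Ω₀] {Pr : Measure Ω₀} {m : ℕ}
    {ξ : Ω₀ → Fin m → ℝ} (hm : Measurable ξ) {v : ℝ}
    (hlaw : IsGaussianLaw (Measure.map ξ Pr) 0 (v • (1 : Matrix (Fin m) (Fin m) ℝ)))
    (i : Fin m) :
    MemLp (fun ω => ξ ω i) 2 Pr ∧ ∫ ω, ξ ω i ∂Pr = 0 ∧ ∫ ω, ξ ω i ^ 2 ∂Pr = v := by
  obtain ⟨h1, h2, h3⟩ := gaussianLaw_eval hlaw i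
  refine ⟨?_, ?_, ?_⟩
  · exact (memLp_map_measure_iff (measurable_pi_apply i).aestronglyMeasurable
      hm.aemeasurable).1 h1
  · rwa [integral_map hm.aemeasurable (measurable_pi_apply i).aestronglyMeasurable] at h2
  · rwa [integral_map hm.aemeasurable
      ((measurable_pi_apply i).pow_const 2).aestronglyMeasurable] at h3

lemma integral_dot_self {Ω₀ : Type*} [MeasurableSpace Ω₀] {Pr : Measure Ω₀} {d : ℕ} {v : ℝ}
    {ξ₁ : Ω₀ → Fin d → ℝ} (hm1 : Measurable ξ₁)
    (hlaw1 : IsGaussianLaw (Measure.map ξ₁ Pr) 0 (v • (1 : Matrix (Fin d) (Fin d) ℝ))) :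
    Integrable (fun ω => ξ₁ ω ⬝ᵥ ξ₁ ω) Pr ∧ ∫ ω, ξ₁ ω ⬝ᵥ ξ₁ ω ∂Pr = d * v := by
  have h := gaussianLaw_coord hm1 hlaw1
  have hi : ∀ i ∈ Finset.univ, Integrable (fun ω => ξ₁ ω i * ξ₁ ω i) Pr := fun i _ =>
    (h i).1.integrable_mul (h i).1
  unfold dotProduct
  refine ⟨integrable_finsetSum _ hi, ?_⟩
  rw [integral_finsetSum _ hi]
  simp only [← pow_two, (h _).2.2]
  simp

/-! ### Risk of the regularised combination -/

section Risk

variable {Ω₀ : Type*} [MeasurableSpace Ω₀] {Pr : Measure Ω₀} [IsProbabilityMeasure Pr]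
  {d : ℕ} {v w : ℝ} {η : Fin d → ℝ} {ξ₁ ξ₂ : Ω₀ → Fin d → ℝ}

/-- The second moment of the shifted difference, `E‖ξ₁ - ξ₂ - η‖² = ‖η‖² + d (v + w)`. -/
lemma integral_diff_dot_self (hm1 : Measurable ξ₁) (hm2 : Measurable ξ₂)
    (hlaw1 : IsGaussianLaw (Measure.map ξ₁ Pr) 0 (v • (1 : Matrix (Fin d) (Fin d) ℝ)))
    (hlaw2 : IsGaussianLaw (Measure.map ξ₂ Pr) 0 (w • (1 : Matrix (Fin d) (Fin d) ℝ)))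
    (hindep : IndepFun ξ₁ ξ₂ Pr) :
    Integrable (fun ω => (ξ₁ ω - ξ₂ ω - η) ⬝ᵥ (ξ₁ ω - ξ₂ ω - η)) Pr ∧
      ∫ ω, (ξ₁ ω - ξ₂ ω - η) ⬝ᵥ (ξ₁ ω - ξ₂ ω - η) ∂Pr = η ⬝ᵥ η + d * (w + v) := by
  have h1 := gaussianLaw_coord hm1 hlaw1
  have h2 := gaussianLaw_coord hm2 hlaw2
  have hX : ∀ i, MemLp (fun ω => (ξ₁ ω - ξ₂ ω - η) i) 2 Pr := fun i =>
    ((h1 i).1.sub (h2 i).1).sub (memLp_const (η i))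
  have hi : ∀ i ∈ Finset.univ, Integrable
      (fun ω => (ξ₁ ω - ξ₂ ω - η) i * (ξ₁ ω - ξ₂ ω - η) i) Pr := fun i _ =>
    (hX i).integrable_mul (hX i)
  have hE : ∀ i, ∫ ω, (ξ₁ ω - ξ₂ ω - η) i * (ξ₁ ω - ξ₂ ω - η) i ∂Pr
      = η i * η i + (w + v) := by
    intro i
    have hc : IndepFun (fun ω => ξ₁ ω i) (fun ω => ξ₂ ω i) Pr :=
      hindep.comp (measurable_pi_apply i) (measurable_pi_apply i)
    have h12 : ∫ ω, ξ₁ ω i * ξ₂ ω i ∂Pr = 0 := by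
      have := hc.integral_mul_eq_mul_integral (h1 i).1.1 (h2 i).1.1
      rw [(h1 i).2.1, zero_mul] at this
      exact this
    have i11 : Integrable (fun ω => ξ₁ ω i ^ 2) Pr := (h1 i).1.integrable_sq
    have i22 : Integrable (fun ω => ξ₂ ω i ^ 2) Pr := (h2 i).1.integrable_sq
    have i12 : Integrable (fun ω => 2 * (ξ₁ ω i * ξ₂ ω i)) Pr :=
      ((h1 i).1.integrable_mul (h2 i).1).const_mul 2
    have i1 : Integrable (fun ω => 2 * η i * ξ₁ ω i) Pr :=
      ((h1 i).1.integrable (by norm_num)).const_mul _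
    have i2 : Integrable (fun ω => 2 * η i * ξ₂ ω i) Pr :=
      ((h2 i).1.integrable (by norm_num)).const_mul _
    have j1 : Integrable (fun ω => ξ₁ ω i ^ 2 + ξ₂ ω i ^ 2) Pr := i11.add i22
    have j2 : Integrable (fun ω => ξ₁ ω i ^ 2 + ξ₂ ω i ^ 2 - 2 * (ξ₁ ω i * ξ₂ ω i)) Pr :=
      j1.sub i12
    have j3 : Integrable (fun ω => ξ₁ ω i ^ 2 + ξ₂ ω i ^ 2 - 2 * (ξ₁ ω i * ξ₂ ω i)
        - 2 * η i * ξ₁ ω i) Pr := j2.sub i1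
    have j4 : Integrable (fun ω => ξ₁ ω i ^ 2 + ξ₂ ω i ^ 2 - 2 * (ξ₁ ω i * ξ₂ ω i)
        - 2 * η i * ξ₁ ω i + 2 * η i * ξ₂ ω i) Pr := j3.add i2
    calc ∫ ω, (ξ₁ ω - ξ₂ ω - η) i * (ξ₁ ω - ξ₂ ω - η) i ∂Pr
        = ∫ ω, (ξ₁ ω i ^ 2 + ξ₂ ω i ^ 2 - 2 * (ξ₁ ω i * ξ₂ ω i) - 2 * η i * ξ₁ ω i
            + 2 * η i * ξ₂ ω i + η i * η i) ∂Pr := by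
          congr 1 with ω
          simp only [Pi.sub_apply]
          ring
      _ = _ := by
          rw [integral_add j4 (integrable_const _), integral_add j3 i2, integral_sub j2 i1,
            integral_sub j1 i12, integral_add i11 i22,
            integral_const_mul, integral_const_mul, integral_const_mul, h12,
            (h1 i).2.1, (h2 i).2.1, (h1 i).2.2, (h2 i).2.2]
          simp
          ring
  refine ⟨by unfold dotProduct; exact integrable_finsetSum _ hi, ?_⟩
  unfold dotProduct
  rw [integral_finsetSum _ hi]
  simp only [hE, Finset.sum_add_distrib]
  simp
  ring

/-- Stein's identity for the random field: `stein_law` integrated over the law of `ξ₂`. -/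
lemma stein_indep (hm1 : Measurable ξ₁) (hm2 : Measurable ξ₂) (hv : 0 ≤ v)
    (hlaw1 : IsGaussianLaw (Measure.map ξ₁ Pr) 0 (v • (1 : Matrix (Fin d) (Fin d) ℝ)))
    (hindep : IndepFun ξ₁ ξ₂ Pr) {X : Ω₀ → Fin d → ℝ} (hX : X = fun ω => ξ₁ ω - ξ₂ ω - η)
    {ε : ℝ} (hε : 0 < ε) :
    Integrable (fun ω => ξ₁ ω ⬝ᵥ X ω / (X ω ⬝ᵥ X ω + ε)) Pr ∧
    Integrable (fun ω => v * (d / (X ω ⬝ᵥ X ω + ε)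
      - 2 * (X ω ⬝ᵥ X ω) / (X ω ⬝ᵥ X ω + ε) ^ 2)) Pr ∧
    ∫ ω, ξ₁ ω ⬝ᵥ X ω / (X ω ⬝ᵥ X ω + ε) ∂Pr
      = ∫ ω, v * (d / (X ω ⬝ᵥ X ω + ε)
          - 2 * (X ω ⬝ᵥ X ω) / (X ω ⬝ᵥ X ω + ε) ^ 2) ∂Pr := by
  have hmX : Measurable X := by rw [hX]; fun_prop
  have I1 : Integrable (fun ω => ξ₁ ω ⬝ᵥ X ω / (X ω ⬝ᵥ X ω + ε)) Pr := by
    refine Integrable.mono' (((integral_dot_self hm1 hlaw1).1.div_const (2 * ε)).add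
      (integrable_const (1 / 2 : ℝ))) ?_ (ae_of_all _ fun ω => reg_bound _ _ hε)
    apply Measurable.aestronglyMeasurable
    unfold dotProduct
    fun_prop
  have I2 : Integrable (fun ω => v * (d / (X ω ⬝ᵥ X ω + ε)
      - 2 * (X ω ⬝ᵥ X ω) / (X ω ⬝ᵥ X ω + ε) ^ 2)) Pr := by
    refine Integrable.of_bound (C := v * (d / ε + 2 / ε)) ?_ (ae_of_all _ fun ω => ?_)
    · apply Measurable.aestronglyMeasurable
      unfold dotProduct
      fun_prop
    · have hq := dot_self_nonneg (X ω)
      have a1 : (d : ℝ) / (X ω ⬝ᵥ X ω + ε) ≤ d / ε := by gcongr; linarith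
      have a2 : 2 * (X ω ⬝ᵥ X ω) / (X ω ⬝ᵥ X ω + ε) ^ 2 ≤ 2 / ε := by
        rw [div_le_div_iff₀ (by positivity) hε]
        nlinarith [mul_nonneg hq hε.le]
      have a3 : 0 ≤ (d : ℝ) / (X ω ⬝ᵥ X ω + ε) := by positivity
      have a4 : 0 ≤ 2 * (X ω ⬝ᵥ X ω) / (X ω ⬝ᵥ X ω + ε) ^ 2 := by positivity
      rw [Real.norm_eq_abs, abs_mul, abs_of_nonneg hv]
      refine mul_le_mul_of_nonneg_left ?_ hv
      rw [abs_le]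
      constructor <;> linarith
  refine ⟨I1, I2, ?_⟩
  let D : (Fin d → ℝ) × (Fin d → ℝ) → (Fin d → ℝ) := fun p => p.1 - (p.2 + η)
  let F : (Fin d → ℝ) × (Fin d → ℝ) → ℝ := fun p => p.1 ⬝ᵥ D p / (D p ⬝ᵥ D p + ε)
  let H : (Fin d → ℝ) × (Fin d → ℝ) → ℝ := fun p =>
    v * (d / (D p ⬝ᵥ D p + ε) - 2 * (D p ⬝ᵥ D p) / (D p ⬝ᵥ D p + ε) ^ 2)
  have hmF : Measurable F := by simp only [F, D]; unfold dotProduct; fun_prop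
  have hmH : Measurable H := by simp only [H, D]; unfold dotProduct; fun_prop
  have hpair : Measurable fun ω => (ξ₁ ω, ξ₂ ω) := hm1.prodMk hm2
  have hXD : ∀ ω, X ω = D (ξ₁ ω, ξ₂ ω) := fun ω => by simp only [hX, D]; abel
  have hmap := hindep.map_prod_eq_prod_map_map hm1.aemeasurable hm2.aemeasurable
  have hp1 := Measure.isProbabilityMeasure_map (μ := Pr) hm1.aemeasurable
  have hp2 := Measure.isProbabilityMeasure_map (μ := Pr) hm2.aemeasurable
  have J1 : Integrable F ((Pr.map ξ₁).prod (Pr.map ξ₂)) := by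
    rw [← hmap, integrable_map_measure hmF.aestronglyMeasurable hpair.aemeasurable]
    simpa only [hXD, F, Function.comp_def] using I1
  have J2 : Integrable H ((Pr.map ξ₁).prod (Pr.map ξ₂)) := by
    rw [← hmap, integrable_map_measure hmH.aestronglyMeasurable hpair.aemeasurable]
    simpa only [hXD, H, Function.comp_def] using I2
  simp only [hXD]
  change ∫ ω, F (ξ₁ ω, ξ₂ ω) ∂Pr = ∫ ω, H (ξ₁ ω, ξ₂ ω) ∂Pr
  rw [← integral_map hpair.aemeasurable hmF.aestronglyMeasurable,
    ← integral_map hpair.aemeasurable hmH.aestronglyMeasurable, hmap,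
    integral_prod_symm _ J1, integral_prod_symm _ J2]
  congr 1 with y
  exact stein_law hlaw1 (y + η) hε

/-- The risk bound for the regularised combination `ξ₁ - γ v X / (‖X‖² + ε)`. The tangent line
of `t ↦ 1 / t` at `E‖X‖² + ε` plays the part of Jensen's inequality. -/
lemma risk_reg (hm1 : Measurable ξ₁) (hm2 : Measurable ξ₂) (hv : 0 ≤ v)
    (hlaw1 : IsGaussianLaw (Measure.map ξ₁ Pr) 0 (v • (1 : Matrix (Fin d) (Fin d) ℝ)))
    (hlaw2 : IsGaussianLaw (Measure.map ξ₂ Pr) 0 (w • (1 : Matrix (Fin d) (Fin d) ℝ)))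
    (hindep : IndepFun ξ₁ ξ₂ Pr) {X : Ω₀ → Fin d → ℝ} (hX : X = fun ω => ξ₁ ω - ξ₂ ω - η)
    {γ : ℝ} (hγ0 : 0 < γ) (hγ2 : γ ≤ 2 * ((d : ℝ) - 2))
    {M : ℝ} (hM : M = η ⬝ᵥ η + d * (w + v)) (hM0 : 0 < M)
    {ε : ℝ} (hε : 0 < ε) {Z : Ω₀ → Fin d → ℝ}
    (hZ : Z = fun ω => ξ₁ ω - (γ * v / (X ω ⬝ᵥ X ω + ε)) • X ω) :
    Integrable (fun ω => Z ω ⬝ᵥ Z ω) Pr ∧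
      ∫ ω, Z ω ⬝ᵥ Z ω ∂Pr ≤ d * v - γ * v ^ 2 * (2 * ((d : ℝ) - 2) - γ) / (M + ε) := by
  have hmX : Measurable X := by rw [hX]; fun_prop
  obtain ⟨S1, S2, S3⟩ := stein_indep (η := η) hm1 hm2 hv hlaw1 hindep hX hε
  obtain ⟨Q1, Q2⟩ := integral_dot_self hm1 hlaw1
  obtain ⟨R1, R2⟩ := integral_diff_dot_self (η := η) hm1 hm2 hlaw1 hlaw2 hindep
  have R1' : Integrable (fun ω => X ω ⬝ᵥ X ω) Pr := by rw [hX]; exact R1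
  have R2' : ∫ ω, X ω ⬝ᵥ X ω ∂Pr = M := by rw [hX, hM]; exact R2
  have hq : ∀ ω, 0 ≤ X ω ⬝ᵥ X ω := fun ω => dot_self_nonneg _
  have T : Integrable (fun ω => X ω ⬝ᵥ X ω / (X ω ⬝ᵥ X ω + ε) ^ 2) Pr := by
    refine Integrable.of_bound (C := 1 / ε) ?_ (ae_of_all _ fun ω => ?_)
    · apply Measurable.aestronglyMeasurable
      unfold dotProduct
      fun_prop
    · have := hq ω
      rw [Real.norm_eq_abs, abs_of_nonneg (by positivity), div_le_div_iff₀ (by positivity) hε]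
      nlinarith [mul_nonneg this hε.le]
  have hexp : ∀ ω, Z ω ⬝ᵥ Z ω = ξ₁ ω ⬝ᵥ ξ₁ ω
      - 2 * γ * v * (ξ₁ ω ⬝ᵥ X ω / (X ω ⬝ᵥ X ω + ε))
      + (γ * v) ^ 2 * (X ω ⬝ᵥ X ω / (X ω ⬝ᵥ X ω + ε) ^ 2) := by
    intro ω
    simp only [hZ, sub_dotProduct, dotProduct_sub, smul_dotProduct, dotProduct_smul, smul_eq_mul,
      dotProduct_comm (X ω) (ξ₁ ω)]
    generalize X ω ⬝ᵥ X ω + ε = s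
    ring
  have hZi : Integrable (fun ω => Z ω ⬝ᵥ Z ω) Pr := by
    simp only [hexp]
    exact (Q1.sub (S1.const_mul _)).add (T.const_mul _)
  refine ⟨hZi, ?_⟩
  have hK : 0 ≤ γ * v ^ 2 * (2 * ((d : ℝ) - 2) - γ) := by
    have : 0 ≤ 2 * ((d : ℝ) - 2) - γ := by linarith
    positivity
  set K := γ * v ^ 2 * (2 * ((d : ℝ) - 2) - γ) with hKdef
  have S1' : Integrable (fun ω => 2 * γ * v * (ξ₁ ω ⬝ᵥ X ω / (X ω ⬝ᵥ X ω + ε))) Pr :=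
    S1.const_mul _
  have T' : Integrable (fun ω => (γ * v) ^ 2 * (X ω ⬝ᵥ X ω / (X ω ⬝ᵥ X ω + ε) ^ 2)) Pr :=
    T.const_mul _
  have QS : Integrable (fun ω => ξ₁ ω ⬝ᵥ ξ₁ ω
      - 2 * γ * v * (ξ₁ ω ⬝ᵥ X ω / (X ω ⬝ᵥ X ω + ε))) Pr := Q1.sub S1'
  have S2' : Integrable (fun ω => -(2 * γ * v) * (v * (d / (X ω ⬝ᵥ X ω + ε)
      - 2 * (X ω ⬝ᵥ X ω) / (X ω ⬝ᵥ X ω + ε) ^ 2))) Pr := S2.const_mul _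
  have ST : Integrable (fun ω => -(2 * γ * v) * (v * (d / (X ω ⬝ᵥ X ω + ε)
      - 2 * (X ω ⬝ᵥ X ω) / (X ω ⬝ᵥ X ω + ε) ^ 2))
      + (γ * v) ^ 2 * (X ω ⬝ᵥ X ω / (X ω ⬝ᵥ X ω + ε) ^ 2)) Pr := S2'.add T'
  have Rε : Integrable (fun ω => X ω ⬝ᵥ X ω + ε) Pr := R1'.add (integrable_const ε)
  have hU : Integrable (fun ω => 2 / (M + ε) - (X ω ⬝ᵥ X ω + ε) / (M + ε) ^ 2) Pr :=
    (integrable_const _).sub (Rε.div_const _)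
  calc ∫ ω, Z ω ⬝ᵥ Z ω ∂Pr
      = d * v + ∫ ω, (-(2 * γ * v) * (v * (d / (X ω ⬝ᵥ X ω + ε)
          - 2 * (X ω ⬝ᵥ X ω) / (X ω ⬝ᵥ X ω + ε) ^ 2))
          + (γ * v) ^ 2 * (X ω ⬝ᵥ X ω / (X ω ⬝ᵥ X ω + ε) ^ 2)) ∂Pr := by
        simp only [hexp]
        rw [integral_add QS T', integral_sub Q1 S1', Q2, integral_const_mul (2 * γ * v), S3,
          integral_add S2' T', integral_const_mul (-(2 * γ * v))]
        ring
    _ ≤ d * v + ∫ ω, -K * (2 / (M + ε) - (X ω ⬝ᵥ X ω + ε) / (M + ε) ^ 2) ∂Pr := by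
        refine add_le_add le_rfl ?_
        refine integral_mono ST (hU.const_mul _) fun ω => ?_
        have h0 := hq ω
        set q := X ω ⬝ᵥ X ω
        have hqε : 0 < q + ε := by positivity
        have hMε : 0 < M + ε := by positivity
        have hr : q / (q + ε) ^ 2 ≤ 1 / (q + ε) := by
          rw [div_le_div_iff₀ (by positivity) hqε]
          nlinarith
        have ht : 2 / (M + ε) - (q + ε) / (M + ε) ^ 2 ≤ 1 / (q + ε) := by
          rw [← sub_nonneg]
          have : 1 / (q + ε) - (2 / (M + ε) - (q + ε) / (M + ε) ^ 2)
              = (q - M) ^ 2 / ((q + ε) * (M + ε) ^ 2) := by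
            field_simp
            ring
          rw [this]
          positivity
        have e : -(2 * γ * v) * (v * (d / (q + ε) - 2 * q / (q + ε) ^ 2))
            + (γ * v) ^ 2 * (q / (q + ε) ^ 2)
            = -(2 * γ * v ^ 2 * d) * (1 / (q + ε))
              + (4 * γ * v ^ 2 + γ ^ 2 * v ^ 2) * (q / (q + ε) ^ 2) := by ring
        have h1 : (4 * γ * v ^ 2 + γ ^ 2 * v ^ 2) * (q / (q + ε) ^ 2)
            ≤ (4 * γ * v ^ 2 + γ ^ 2 * v ^ 2) * (1 / (q + ε)) :=
          mul_le_mul_of_nonneg_left hr (by positivity)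
        have h2 := mul_le_mul_of_nonneg_left ht hK
        change _ ≤ -K * (2 / (M + ε) - (q + ε) / (M + ε) ^ 2)
        calc _ = _ := e
          _ ≤ -(2 * γ * v ^ 2 * d) * (1 / (q + ε))
              + (4 * γ * v ^ 2 + γ ^ 2 * v ^ 2) * (1 / (q + ε)) := by linarith
          _ = -(K * (1 / (q + ε))) := by rw [hKdef]; ring
          _ ≤ _ := by linarith
    _ = d * v - K / (M + ε) := by
        rw [integral_const_mul, integral_sub (integrable_const _) (Rε.div_const _),
          integral_div ((M + ε) ^ 2),
          integral_add R1' (integrable_const ε), R2']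
        simp only [integral_const, probReal_univ, one_smul]
        field_simp
        ring

end Risk
/-! ### Removing the regularisation -/

/-- Lemma 1 of the paper (risk dominance of the semi-modular posterior over the cut
posterior, in the Gaussian limit): for independent `ξ₁ ~ N(0, τ² I_d)`,
`ξ₂ ~ N(0, σ² I_d)` in `ℝ^d`, `d ≥ 3`, `X = ξ₁ - ξ₂ - η`, `ω̂ = γ τ² / ‖X‖²`,
`Z = ξ₁ - ω̂ X` and `0 < γ ≤ 2(d-2)`,
`E[‖Z‖²] ≤ d τ² - γ τ⁴ (2(d-2) - γ) / (ηᵀη + d(σ² + τ²))`, and in particular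
`E[‖Z‖²] ≤ d τ²`. -/
theorem stmt_5 {Ω₀ : Type*} [MeasurableSpace Ω₀] (Pr : Measure Ω₀)
    [IsProbabilityMeasure Pr] {d : ℕ} (hd : 3 ≤ d)
    (γ : ℝ) (hγ0 : 0 < γ) (hγ2 : γ ≤ 2 * ((d : ℝ) - 2))
    (τ σ : ℝ) (hτ : 0 < τ) (hσ : 0 < σ) (η : Fin d → ℝ)
    (ξ₁ ξ₂ : Ω₀ → Fin d → ℝ) (hm1 : Measurable ξ₁) (hm2 : Measurable ξ₂)
    (hlaw1 : IsGaussianLaw (Measure.map ξ₁ Pr) 0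
      (τ ^ 2 • (1 : Matrix (Fin d) (Fin d) ℝ)))
    (hlaw2 : IsGaussianLaw (Measure.map ξ₂ Pr) 0
      (σ ^ 2 • (1 : Matrix (Fin d) (Fin d) ℝ)))
    (hindep : IndepFun ξ₁ ξ₂ Pr) :
    ∀ X : Ω₀ → Fin d → ℝ, X = (fun ω => ξ₁ ω - ξ₂ ω - η) →
      ∀ Z : Ω₀ → Fin d → ℝ,
        Z = (fun ω => ξ₁ ω - (γ * τ ^ 2 / (X ω ⬝ᵥ X ω)) • X ω) →
        (∫ ω, Z ω ⬝ᵥ Z ω ∂Pr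
            ≤ (d : ℝ) * τ ^ 2
              - γ * τ ^ 4 * (2 * ((d : ℝ) - 2) - γ)
                / (η ⬝ᵥ η + (d : ℝ) * (σ ^ 2 + τ ^ 2))) ∧
          ∫ ω, Z ω ⬝ᵥ Z ω ∂Pr ≤ (d : ℝ) * τ ^ 2 := by
  intro X hX Z hZ
  have hmX : Measurable X := by rw [hX]; fun_prop
  have hηη := dot_self_nonneg η
  have hd' : (3 : ℝ) ≤ d := by exact_mod_cast hd
  set M := η ⬝ᵥ η + (d : ℝ) * (σ ^ 2 + τ ^ 2) with hM
  have hM0 : 0 < M := by positivity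
  set K := γ * τ ^ 4 * (2 * ((d : ℝ) - 2) - γ) with hK
  have hK0 : 0 ≤ K := by
    have : 0 ≤ 2 * ((d : ℝ) - 2) - γ := by linarith
    positivity
  suffices h : ∫ ω, Z ω ⬝ᵥ Z ω ∂Pr ≤ d * τ ^ 2 - K / M by
    refine ⟨h, h.trans ?_⟩
    have : 0 ≤ K / M := by positivity
    linarith
  let ε : ℕ → ℝ := fun n => 1 / ((n : ℝ) + 1)
  have hε : ∀ n, 0 < ε n := fun n => by simp only [ε]; positivity
  have hεlim : Filter.Tendsto ε Filter.atTop (nhds 0) := tendsto_one_div_add_atTop_nhds_zero_nat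
  let Y : ℕ → Ω₀ → Fin d → ℝ := fun n ω =>
    ξ₁ ω - (γ * τ ^ 2 / (X ω ⬝ᵥ X ω + ε n)) • X ω
  have hY : ∀ n, Integrable (fun ω => Y n ω ⬝ᵥ Y n ω) Pr ∧
      ∫ ω, Y n ω ⬝ᵥ Y n ω ∂Pr ≤ d * τ ^ 2 - K / (M + ε n) := by
    intro n
    have := risk_reg hm1 hm2 (sq_nonneg τ) hlaw1 hlaw2 hindep hX hγ0 hγ2 hM hM0 (hε n)
      (Z := Y n) rfl
    rwa [← pow_mul] at this
  have hlim : Filter.Tendsto (fun n => d * τ ^ 2 - K / (M + ε n)) Filter.atTop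
      (nhds (d * τ ^ 2 - K / M)) := by
    have h1 : Filter.Tendsto (fun n => M + ε n) Filter.atTop (nhds M) := by
      simpa using hεlim.const_add M
    exact (tendsto_const_nhds.div h1 hM0.ne').const_sub _
  have hB0 : 0 ≤ d * τ ^ 2 - K / M := ge_of_tendsto' hlim fun n =>
    (integral_nonneg fun ω => dot_self_nonneg (Y n ω)).trans (hY n).2
  -- At `X ω = 0` the convergence holds as well: there both sides equal `ξ₁ ω ⬝ᵥ ξ₁ ω`.
  have hpt : ∀ ω, Filter.Tendsto (fun n => Y n ω ⬝ᵥ Y n ω) Filter.atTop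
      (nhds (Z ω ⬝ᵥ Z ω)) := by
    intro ω
    have hcoef : Filter.Tendsto (fun n => Y n ω) Filter.atTop (nhds (Z ω)) := by
      rw [hZ]
      by_cases h0 : X ω = 0
      · simp [Y, h0]
      · have hq : X ω ⬝ᵥ X ω ≠ 0 := fun h => h0 (dotProduct_self_eq_zero.1 h)
        have h1 : Filter.Tendsto (fun n => X ω ⬝ᵥ X ω + ε n) Filter.atTop
            (nhds (X ω ⬝ᵥ X ω)) := by
          simpa using hεlim.const_add (X ω ⬝ᵥ X ω)
        exact ((tendsto_const_nhds.div h1 hq).smul_const (X ω)).const_sub _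
    have hcont : Continuous fun z : Fin d → ℝ => z ⬝ᵥ z := by
      unfold dotProduct; fun_prop
    exact (hcont.tendsto _).comp hcoef
  have hmY : ∀ n, Measurable fun ω => ENNReal.ofReal (Y n ω ⬝ᵥ Y n ω) := fun n => by
    simp only [Y]; unfold dotProduct; fun_prop
  have hmZ : Measurable fun ω => Z ω ⬝ᵥ Z ω := by
    rw [hZ]; unfold dotProduct; fun_prop
  have hfatou : ∫⁻ ω, ENNReal.ofReal (Z ω ⬝ᵥ Z ω) ∂Pr
      ≤ ENNReal.ofReal (d * τ ^ 2 - K / M) := by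
    calc ∫⁻ ω, ENNReal.ofReal (Z ω ⬝ᵥ Z ω) ∂Pr
        = ∫⁻ ω, Filter.liminf (fun n => ENNReal.ofReal (Y n ω ⬝ᵥ Y n ω)) Filter.atTop ∂Pr := by
          congr 1 with ω
          exact (ENNReal.tendsto_ofReal (hpt ω)).liminf_eq.symm
      _ ≤ Filter.liminf (fun n => ∫⁻ ω, ENNReal.ofReal (Y n ω ⬝ᵥ Y n ω) ∂Pr) Filter.atTop :=
          lintegral_liminf_le hmY
      _ ≤ Filter.liminf (fun n => ENNReal.ofReal (d * τ ^ 2 - K / (M + ε n))) Filter.atTop := by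
          refine Filter.liminf_le_liminf (Filter.Eventually.of_forall fun n => ?_)
          rw [← ofReal_integral_eq_lintegral_ofReal (hY n).1
            (ae_of_all _ fun ω => dot_self_nonneg (Y n ω))]
          exact ENNReal.ofReal_le_ofReal (hY n).2
      _ = _ := (ENNReal.tendsto_ofReal hlim).liminf_eq
  rw [integral_eq_lintegral_of_nonneg_ae (ae_of_all _ fun ω => dot_self_nonneg (Z ω))
    hmZ.aestronglyMeasurable]
  exact ENNReal.toReal_le_of_le_ofReal hB0 hfatou
end

section
/- Assume in addition that M is positive definite and d₁ ≥ 3. Let K := (Γ₁−Γ)ᵀ·Υ·Γ₁·Ω. Then Q > 0 almost surely, E[1/Q] < ∞, and E[(ξ+τ)ᵀ·(Γ₁−Γ)ᵀ·Υ·Γ₁·(ξ+τ) / Q] = tr(K)·E[1/Q] − 2·E[(ξ+τ)ᵀ·K·P·(ξ+τ) / Q²]. -/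
/-!
Write `Υ = Cᵀ C`, `D = Γ₁ - Γ` and `ξ = A ζ` with `ζ` standard Gaussian. Then `Q = ‖Y‖²`, where
`Y = C D (ξ + τ) = b + ∑ ζ_i a_i` is an affine image of `ζ` in a Euclidean space, and everything
follows from the coordinatewise Gaussian integration by parts `E[ζ_i f(ζ)] = E[∂_i f(ζ)]`
(`stein_coord`). The map `y ↦ ⟪u, y⟫ / ‖y‖²` is singular at `0`, so Stein's identity is first used
for the smooth bounded functions `⟪u, Y⟫ / (‖Y‖² + ε)` (`stein_reg`).

The integrability of `1 / ‖Y‖²` comes from the same regularized identity (`exists_bound_reg`). As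
`M` is invertible there are vectors `g_i` with `∑ ⟪g_i, y⟫ ⟪a_i, y⟫ = ‖y‖²` and
`∑ ⟪g_i, a_i⟫ = d₁`. Taking `u = g_i` and summing over `i`, the derivative side is
`E[d₁ / s - 2 ‖Y‖² / s²] ≥ (d₁ - 2) E[1 / s]` with `s = ‖Y‖² + ε`, while the other side is at most
`E[1 / s] / 2 + const` by Young's inequality. Since `d₁ ≥ 3`, this bounds `E[1 / s]` uniformly in
`ε`, and Fatou's lemma gives both `Y ≠ 0` almost surely and `E[1 / ‖Y‖²] < ∞`
(`pos_and_integrable`).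

All regularized integrands are dominated by multiples of `1 / ‖Y‖²` and `ζ_i²`, so letting `ε → 0`
gives Stein's identity for `⟪u, Y⟫ / ‖Y‖²` (`stein_limit`). The claim is the sum over `i` with `u`
the `i`-th column of `C Γ₁ A`; the condition `Γ₁ τ = 0` identifies `Γ₁ A ζ` with `Γ₁ (ξ + τ)`.
-/

open Matrix MeasureTheory ProbabilityTheory

/-! ### Gaussian integration by parts -/

lemma hasDerivAt_gaussianPDF (x : ℝ) :
    HasDerivAt (gaussianPDFReal 0 1) (-x * gaussianPDFReal 0 1 x) x := by
  have h : gaussianPDFReal 0 1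
      = fun x : ℝ => (√(2 * Real.pi * (1 : NNReal)))⁻¹ * Real.exp (-(x - 0) ^ 2 / (2 * (1 : NNReal))) := by
    funext x; simp [gaussianPDFReal_def]
  rw [h]
  have h1 : HasDerivAt (fun x : ℝ => -(x - 0) ^ 2 / (2 * ((1 : NNReal) : ℝ))) (-x) x := by
    have := (((hasDerivAt_id' x).sub_const 0).fun_pow 2).fun_neg.div_const (2 * ((1 : NNReal) : ℝ))
    refine this.congr_deriv ?_
    simp
    ring
  refine (h1.exp.const_mul (√(2 * Real.pi * (1 : NNReal)))⁻¹).congr_deriv ?_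
  ring

lemma integrable_gaussian_iff (g : ℝ → ℝ) :
    Integrable g (gaussianReal 0 1) ↔ Integrable (fun x => g x * gaussianPDFReal 0 1 x) := by
  rw [gaussianReal_of_var_ne_zero _ one_ne_zero]
  unfold gaussianPDF
  rw [integrable_withDensity_iff (by fun_prop) (by simp)]
  simp [ENNReal.toReal_ofReal, gaussianPDFReal_nonneg]

/-- Stein's lemma on the line, for bounded `C¹` functions with bounded derivative. -/
lemma stein_one {g g' : ℝ → ℝ} (hg : ∀ x, HasDerivAt g (g' x) x) (hg'c : Continuous g')
    {C C' : ℝ} (hC : ∀ x, |g x| ≤ C) (hC' : ∀ x, |g' x| ≤ C') :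
    ∫ x, x * g x ∂(gaussianReal 0 1) = ∫ x, g' x ∂(gaussianReal 0 1) := by
  have hgc : Continuous g := continuous_iff_continuousAt.2 fun x => (hg x).continuousAt
  have hid : Integrable (fun x : ℝ => x) (gaussianReal 0 1) :=
    memLp_one_iff_integrable.1 (memLp_id_gaussianReal' 1 (by simp))
  have i1 : Integrable (fun x => x * g x) (gaussianReal 0 1) :=
    hid.mul_bdd (c := C) hgc.aestronglyMeasurable (.of_forall hC)
  have i2 : Integrable g' (gaussianReal 0 1) :=
    .of_bound hg'c.aestronglyMeasurable C' (.of_forall hC')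
  have i3 : Integrable g (gaussianReal 0 1) :=
    .of_bound hgc.aestronglyMeasurable C (.of_forall hC)
  rw [integrable_gaussian_iff] at i1 i2 i3
  have key := integral_mul_deriv_eq_deriv_mul_of_integrable (u := g) (u' := g')
    (v := gaussianPDFReal 0 1) (v' := fun x => -x * gaussianPDFReal 0 1 x)
    (fun x _ => hg x) (fun x _ => hasDerivAt_gaussianPDF x)
    (by convert i1.neg using 1; funext x; simp; ring) i2 i3
  rw [integral_gaussianReal_eq_integral_smul one_ne_zero,
    integral_gaussianReal_eq_integral_smul one_ne_zero]
  simp only [smul_eq_mul]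
  have e1 : ∀ x, gaussianPDFReal 0 1 x * (x * g x) = -(g x * (-x * gaussianPDFReal 0 1 x)) :=
    fun x => by ring
  simp_rw [e1, integral_neg, key, neg_neg]
  exact integral_congr_ae (.of_forall fun x => by simp [mul_comm])

instance inst_s10 (m : ℕ) : IsProbabilityMeasure (_root_.stdGaussian m) := by
  unfold _root_.stdGaussian; infer_instance

lemma memLp_coord {m : ℕ} (i : Fin m) :
    MemLp (fun z : Fin m → ℝ => z i) 2 (_root_.stdGaussian m) :=
  (memLp_id_gaussianReal' (μ := 0) (v := 1) 2 (by simp)).comp_measurePreserving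
    (measurePreserving_eval (fun _ : Fin m => gaussianReal 0 1) i)

lemma integrable_coord_sq {m : ℕ} (i : Fin m) :
    Integrable (fun z : Fin m → ℝ => z i ^ 2) (_root_.stdGaussian m) :=
  (memLp_coord i).integrable_sq

/-- Stein's lemma in the `i`-th coordinate of a standard Gaussian vector: the other coordinates are
frozen by Fubini, and the one-dimensional lemma is applied to the remaining integral. -/
lemma stein_coord_s10 {m : ℕ} (i : Fin m) {f f' : (Fin m → ℝ) → ℝ}
    (hf : ∀ z, HasDerivAt (fun t => f (Function.update z i t)) (f' z) (z i))
    (hfc : Continuous f) (hf'c : Continuous f')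
    {C C' : ℝ} (hC : ∀ x, |f x| ≤ C) (hC' : ∀ x, |f' x| ≤ C') :
    ∫ z, z i * f z ∂(_root_.stdGaussian m) = ∫ z, f' z ∂(_root_.stdGaussian m) := by
  obtain _ | n := m
  · exact i.elim0
  have i1 : Integrable (fun z => z i * f z) (_root_.stdGaussian (n + 1)) :=
    ((memLp_coord i).integrable (by norm_num)).mul_bdd (c := C) hfc.aestronglyMeasurable (.of_forall hC)
  have i2 : Integrable f' (_root_.stdGaussian (n + 1)) :=
    .of_bound hf'c.aestronglyMeasurable C' (.of_forall hC')
  have mp := (measurePreserving_piFinSuccAbove (fun _ : Fin (n + 1) => gaussianReal 0 1) i).symm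
  unfold _root_.stdGaussian at *
  rw [← mp.integrable_comp_emb (MeasurableEquiv.measurableEmbedding _)] at i1 i2
  rw [← mp.integral_comp', ← mp.integral_comp']
  refine (integral_prod_symm _ i1).trans (Eq.trans ?_ (integral_prod_symm _ i2).symm)
  refine integral_congr_ae (.of_forall fun w => ?_)
  have e : ∀ t, (MeasurableEquiv.piFinSuccAbove (fun _ : Fin (n + 1) => ℝ) i).symm (t, w)
      = i.insertNth t w := fun t => rfl
  have hc : Continuous fun t : ℝ => (i.insertNth t w : Fin (n + 1) → ℝ) := by fun_prop
  simp only [Function.comp_apply, e, Fin.insertNth_apply_same]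
  refine stein_one (g := fun t => f (i.insertNth t w)) (fun t => ?_) (hf'c.comp hc)
    (fun _ => hC _) (fun _ => hC' _)
  simpa using hf (i.insertNth t w)

/-! ### The regularized identity -/

section core
variable {E : Type*} [NormedAddCommGroup E] [InnerProductSpace ℝ E] {m : ℕ}

/-- The affine map `z ↦ b + ∑ j, z j • a j` on `ℝ^m`. -/
def aff (a : Fin m → E) (b : E) (z : Fin m → ℝ) : E := b + ∑ j, z j • a j

@[fun_prop]
lemma continuous_aff (a : Fin m → E) (b : E) : Continuous (aff a b) := by
  unfold aff; fun_prop

lemma hasDerivAt_aff (a : Fin m → E) (b : E) (z : Fin m → ℝ) (i : Fin m) :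
    HasDerivAt (fun t => aff a b (Function.update z i t)) (a i) (z i) := by
  have h : ∀ t, aff a b (Function.update z i t) = (aff a b z - z i • a i) + t • a i := by
    intro t
    unfold aff
    rw [← Finset.add_sum_erase _ _ (Finset.mem_univ i),
      ← Finset.add_sum_erase Finset.univ (fun j => z j • a j) (Finset.mem_univ i)]
    have : ∑ j ∈ Finset.univ.erase i, Function.update z i t j • a j
        = ∑ j ∈ Finset.univ.erase i, z j • a j :=
      Finset.sum_congr rfl fun j hj => by
        rw [Function.update_of_ne (Finset.ne_of_mem_erase hj)]
    rw [this, Function.update_self]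
    abel
  simp_rw [h]
  simpa using ((hasDerivAt_id (z i)).smul_const (a i)).const_add (aff a b z - z i • a i)

lemma quot_bound (u y : E) {ε : ℝ} (hε : 0 < ε) :
    |inner ℝ u y / (‖y‖ ^ 2 + ε)| ≤ ‖u‖ * (1 + 1 / ε) := by
  have hs : 0 < ‖y‖ ^ 2 + ε := by positivity
  rw [abs_div, abs_of_pos hs, div_le_iff₀ hs]
  refine (abs_real_inner_le_norm u y).trans ?_
  rw [mul_assoc]
  refine mul_le_mul_of_nonneg_left ?_ (norm_nonneg u)
  have e : (1 + 1 / ε) * (‖y‖ ^ 2 + ε) = ‖y‖ ^ 2 + ε + ‖y‖ ^ 2 / ε + 1 := by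
    field_simp; ring
  have : 0 ≤ ‖y‖ ^ 2 / ε := by positivity
  nlinarith [sq_nonneg (‖y‖ - 1)]

lemma inner_mul_div_bound (u v y : E) {ε : ℝ} (hε : 0 ≤ ε) (hs : 0 < ‖y‖ ^ 2 + ε) :
    |inner ℝ u y * inner ℝ v y / (‖y‖ ^ 2 + ε) ^ 2| ≤ ‖u‖ * ‖v‖ * (1 / (‖y‖ ^ 2 + ε)) := by
  have h1 := abs_real_inner_le_norm u y
  have h2 := abs_real_inner_le_norm v y
  rw [abs_div, abs_of_pos (pow_pos hs 2), abs_mul, mul_one_div, div_le_div_iff₀ (pow_pos hs 2) hs]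
  calc |inner ℝ u y| * |inner ℝ v y| * (‖y‖ ^ 2 + ε)
      ≤ (‖u‖ * ‖y‖) * (‖v‖ * ‖y‖) * (‖y‖ ^ 2 + ε) := by gcongr
    _ = ‖u‖ * ‖v‖ * (‖y‖ ^ 2 * (‖y‖ ^ 2 + ε)) := by ring
    _ ≤ ‖u‖ * ‖v‖ * ((‖y‖ ^ 2 + ε) * (‖y‖ ^ 2 + ε)) := by gcongr; linarith
    _ = ‖u‖ * ‖v‖ * (‖y‖ ^ 2 + ε) ^ 2 := by ring

/-- The left side is the absolute value of the derivative of `y ↦ ⟪u, y⟫ / (‖y‖² + ε)` in the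
direction `v`. The case `ε = 0` is allowed away from `y = 0`. -/
lemma deriv_bound (u v y : E) {ε : ℝ} (hε : 0 ≤ ε) (hs : 0 < ‖y‖ ^ 2 + ε) :
    |inner ℝ u v * (1 / (‖y‖ ^ 2 + ε)) - 2 * (inner ℝ u y * inner ℝ v y / (‖y‖ ^ 2 + ε) ^ 2)|
      ≤ 3 * (‖u‖ * ‖v‖) * (1 / (‖y‖ ^ 2 + ε)) := by
  have h1 := abs_real_inner_le_norm u v
  have h2 := inner_mul_div_bound u v y hε hs
  have h3 : |inner ℝ u v * (1 / (‖y‖ ^ 2 + ε))| ≤ ‖u‖ * ‖v‖ * (1 / (‖y‖ ^ 2 + ε)) := by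
    rw [abs_mul, abs_of_pos (one_div_pos.2 hs)]
    gcongr
  refine (abs_sub _ _).trans ?_
  rw [abs_mul 2, abs_two]
  linarith

/-- Young's inequality for `h * (r / s)`, applied with `h` a norm of the Gaussian vector, `r = ‖y‖`
and `s = ‖y‖² + ε`. -/
lemma young_quot {h r s : ℝ} (hs : 0 < s) (hrs : r ^ 2 ≤ s) :
    h * (r / s) ≤ (1 / s + h ^ 2) / 2 := by
  have h1 : (r / s) ^ 2 ≤ 1 / s := by
    rw [div_pow, div_le_div_iff₀ (by positivity) hs]
    nlinarith
  nlinarith [sq_nonneg (h - r / s)]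

/-- Stein's identity for the function `⟪u, Y⟫ / (‖Y‖² + ε)`, where `Y = aff a b`. -/
lemma stein_reg (a : Fin m → E) (b : E) (i : Fin m) (u : E) {ε : ℝ} (hε : 0 < ε) :
    ∫ z, z i * (inner ℝ u (aff a b z) / (‖aff a b z‖ ^ 2 + ε)) ∂(_root_.stdGaussian m)
    = ∫ z, (inner ℝ u (a i) * (1 / (‖aff a b z‖ ^ 2 + ε))
        - 2 * (inner ℝ u (aff a b z) * inner ℝ (a i) (aff a b z) / (‖aff a b z‖ ^ 2 + ε) ^ 2))
        ∂(_root_.stdGaussian m) := by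
  have hs : ∀ z, 0 < ‖aff a b z‖ ^ 2 + ε := fun z => by positivity
  refine stein_coord_s10 i (fun z => ?_) ?_ ?_ (fun z => quot_bound u _ hε)
    (C' := 3 * (‖u‖ * ‖a i‖) * (1 / ε)) (fun z => (deriv_bound u _ _ hε.le (hs z)).trans ?_)
  · have hY := hasDerivAt_aff a b z i
    have hN := (hY.norm_sq).add_const ε
    have hI := (hasDerivAt_const (z i) u).inner ℝ hY
    have := hI.div hN (by simpa using (hs z).ne')
    refine this.congr_deriv ?_
    simp only [Function.update_eq_self, inner_zero_left, add_zero]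
    rw [real_inner_comm (a i) (aff a b z)]
    have := (hs z).ne'
    field_simp
  · exact Continuous.div (by fun_prop) (by fun_prop) fun z => (hs z).ne'
  · refine Continuous.sub (continuous_const.mul ?_) (continuous_const.mul ?_)
    · exact Continuous.div (by fun_prop) (by fun_prop) fun z => (hs z).ne'
    · exact Continuous.div (by fun_prop) (by fun_prop) fun z => (pow_pos (hs z) 2).ne'
  · have : ε ≤ ‖aff a b z‖ ^ 2 + ε := by nlinarith [sq_nonneg ‖aff a b z‖]
    gcongr

lemma integrable_reg (a : Fin m → E) (b : E) {ε : ℝ} (hε : 0 < ε) :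
    Integrable (fun z => 1 / (‖aff a b z‖ ^ 2 + ε)) (_root_.stdGaussian m) := by
  have hs : ∀ z, 0 < ‖aff a b z‖ ^ 2 + ε := fun z => by positivity
  have hc : Continuous fun z => 1 / (‖aff a b z‖ ^ 2 + ε) :=
    Continuous.div (by fun_prop) (by fun_prop) fun z => (hs z).ne'
  refine .of_bound hc.aestronglyMeasurable (1 / ε) (.of_forall fun z => ?_)
  rw [Real.norm_of_nonneg (one_div_pos.2 (hs z)).le]
  have : ε ≤ ‖aff a b z‖ ^ 2 + ε := by nlinarith [sq_nonneg ‖aff a b z‖]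
  gcongr

lemma integrable_inner_mul {a : Fin m → E} {b : E} {ε : ℝ} (hε : 0 ≤ ε)
    (hpos : ∀ᵐ z ∂(_root_.stdGaussian m), 0 < ‖aff a b z‖ ^ 2 + ε)
    (hinv : Integrable (fun z => 1 / (‖aff a b z‖ ^ 2 + ε)) (_root_.stdGaussian m)) (u v : E) :
    Integrable (fun z => inner ℝ u (aff a b z) * inner ℝ v (aff a b z)
      / (‖aff a b z‖ ^ 2 + ε) ^ 2) (_root_.stdGaussian m) := by
  refine (hinv.const_mul (‖u‖ * ‖v‖)).mono' ?_ ?_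
  · refine (Measurable.div (Continuous.measurable ?_) (Continuous.measurable ?_)).aestronglyMeasurable
    all_goals fun_prop
  · filter_upwards [hpos] with z hz using inner_mul_div_bound u v _ hε hz

lemma abs_quot_le (u y : E) {s : ℝ} (hs : 0 < s) : |inner ℝ u y / s| ≤ ‖u‖ * (‖y‖ / s) := by
  rw [abs_div, abs_of_pos hs, ← mul_div_assoc]
  have := abs_real_inner_le_norm u y
  gcongr

lemma young_coord (y u : E) (t : ℝ) {ε : ℝ} (hε : 0 ≤ ε) (hs : 0 < ‖y‖ ^ 2 + ε) :
    |t * (inner ℝ u y / (‖y‖ ^ 2 + ε))| ≤ (1 / (‖y‖ ^ 2 + ε) + (|t| * ‖u‖) ^ 2) / 2 := by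
  refine le_trans ?_ (young_quot hs (by linarith : ‖y‖ ^ 2 ≤ ‖y‖ ^ 2 + ε))
  rw [abs_mul, mul_assoc]
  exact mul_le_mul_of_nonneg_left (abs_quot_le u y hs) (abs_nonneg t)

lemma integrable_coord_inner {a : Fin m → E} {b : E} {ε : ℝ} (hε : 0 ≤ ε)
    (hpos : ∀ᵐ z ∂(_root_.stdGaussian m), 0 < ‖aff a b z‖ ^ 2 + ε)
    (hinv : Integrable (fun z => 1 / (‖aff a b z‖ ^ 2 + ε)) (_root_.stdGaussian m))
    (i : Fin m) (u : E) :
    Integrable (fun z => z i * (inner ℝ u (aff a b z) / (‖aff a b z‖ ^ 2 + ε)))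
      (_root_.stdGaussian m) := by
  refine ((hinv.add ((integrable_coord_sq i).mul_const (‖u‖ ^ 2))).div_const 2).mono' ?_ ?_
  · refine ((measurable_pi_apply i).mul (Measurable.div (Continuous.measurable ?_)
      (Continuous.measurable ?_))).aestronglyMeasurable
    all_goals fun_prop
  · filter_upwards [hpos] with z hz
    have := young_coord (aff a b z) u (z i) hε hz
    rwa [mul_pow, sq_abs] at this

/-! ### Integrability of the inverse square norm -/

/-- The bound `E[1 / (‖Y‖² + ε)] ≤ C`, uniform in `ε`. The vectors `g i` are dual to the `a i`, so
the sum of the derivatives `∂_i` of `⟪g i, Y⟫ / (‖Y‖² + ε)` is at least `1 / (‖Y‖² + ε)`; its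
expectation is, by Stein's identity, one that Young's inequality bounds by half of
`E[1 / (‖Y‖² + ε)]` plus a constant. -/
lemma exists_bound_reg (a : Fin m → E) (b : E) (g : Fin m → E)
    (hg : ∀ y : E, ∑ i, inner ℝ (g i) y * inner ℝ (a i) y = ‖y‖ ^ 2)
    (hT : 3 ≤ ∑ i, inner ℝ (g i) (a i)) :
    ∃ C : ℝ, ∀ ε : ℝ, 0 < ε →
      ∫ z, 1 / (‖aff a b z‖ ^ 2 + ε) ∂(_root_.stdGaussian m) ≤ C := by
  have hL : MemLp (fun z : Fin m → ℝ => ∑ i, |z i| * ‖g i‖) 2 (_root_.stdGaussian m) :=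
    memLp_finsetSum _ fun i _ => (memLp_coord i).norm.mul_const _
  have hL2 := hL.integrable_sq
  refine ⟨∫ z, (∑ i, |z i| * ‖g i‖) ^ 2 ∂(_root_.stdGaussian m), fun ε hε => ?_⟩
  have hs : ∀ z, 0 < ‖aff a b z‖ ^ 2 + ε := fun z => by positivity
  have hR := integrable_reg a b hε
  have hI1 := fun i => integrable_coord_inner hε.le (.of_forall hs) hR i (g i)
  have hI2 : ∀ i, Integrable (fun z => inner ℝ (g i) (a i) * (1 / (‖aff a b z‖ ^ 2 + ε))
        - 2 * (inner ℝ (g i) (aff a b z) * inner ℝ (a i) (aff a b z)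
          / (‖aff a b z‖ ^ 2 + ε) ^ 2)) (_root_.stdGaussian m) := fun i =>
    (hR.const_mul _).sub ((integrable_inner_mul hε.le (.of_forall hs) hR _ _).const_mul 2)
  have key : ∫ z, ∑ i, z i * (inner ℝ (g i) (aff a b z) / (‖aff a b z‖ ^ 2 + ε))
        ∂(_root_.stdGaussian m)
      = ∫ z, ∑ i, (inner ℝ (g i) (a i) * (1 / (‖aff a b z‖ ^ 2 + ε))
        - 2 * (inner ℝ (g i) (aff a b z) * inner ℝ (a i) (aff a b z)
          / (‖aff a b z‖ ^ 2 + ε) ^ 2)) ∂(_root_.stdGaussian m) := by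
    rw [integral_finsetSum _ fun i _ => hI1 i, integral_finsetSum _ fun i _ => hI2 i]
    exact Finset.sum_congr rfl fun i _ => stein_reg a b i (g i) hε
  have lower : ∫ z, 1 / (‖aff a b z‖ ^ 2 + ε) ∂(_root_.stdGaussian m)
      ≤ ∫ z, ∑ i, (inner ℝ (g i) (a i) * (1 / (‖aff a b z‖ ^ 2 + ε))
        - 2 * (inner ℝ (g i) (aff a b z) * inner ℝ (a i) (aff a b z)
          / (‖aff a b z‖ ^ 2 + ε) ^ 2)) ∂(_root_.stdGaussian m) := by
    refine integral_mono hR (integrable_finsetSum _ fun i _ => hI2 i) fun z => ?_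
    dsimp only
    rw [Finset.sum_sub_distrib, ← Finset.sum_mul, ← Finset.mul_sum, ← Finset.sum_div, hg]
    have hz := hs z
    have h1 : ‖aff a b z‖ ^ 2 / (‖aff a b z‖ ^ 2 + ε) ^ 2 ≤ 1 / (‖aff a b z‖ ^ 2 + ε) := by
      rw [div_le_div_iff₀ (pow_pos hz 2) hz]
      nlinarith
    have h2 := mul_le_mul_of_nonneg_right hT (one_div_pos.2 hz).le
    linarith
  have upper : ∫ z, ∑ i, z i * (inner ℝ (g i) (aff a b z) / (‖aff a b z‖ ^ 2 + ε))
        ∂(_root_.stdGaussian m)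
      ≤ ∫ z, (1 / (‖aff a b z‖ ^ 2 + ε) + (∑ i, |z i| * ‖g i‖) ^ 2) / 2
        ∂(_root_.stdGaussian m) := by
    refine integral_mono (integrable_finsetSum _ fun i _ => hI1 i)
      ((hR.add hL2).div_const 2) fun z => ?_
    have hz := hs z
    refine le_trans ?_ (young_quot hz (by linarith : ‖aff a b z‖ ^ 2 ≤ ‖aff a b z‖ ^ 2 + ε))
    rw [Finset.sum_mul]
    refine Finset.sum_le_sum fun i _ => (le_abs_self _).trans ?_
    rw [abs_mul, mul_assoc]
    exact mul_le_mul_of_nonneg_left (abs_quot_le _ _ hz) (abs_nonneg _)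
  rw [integral_div, integral_add hR hL2] at upper
  linarith

/-- Fatou's lemma turns the uniform bound of `exists_bound_reg` into `Y ≠ 0` almost surely and
`E[1 / ‖Y‖²] < ∞`. -/
lemma pos_and_integrable (a : Fin m → E) (b : E) (g : Fin m → E)
    (hg : ∀ y : E, ∑ i, inner ℝ (g i) y * inner ℝ (a i) y = ‖y‖ ^ 2)
    (hT : 3 ≤ ∑ i, inner ℝ (g i) (a i)) :
    (∀ᵐ z ∂(_root_.stdGaussian m), 0 < ‖aff a b z‖ ^ 2) ∧
      Integrable (fun z => 1 / ‖aff a b z‖ ^ 2) (_root_.stdGaussian m) := by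
  obtain ⟨C, hC⟩ := exists_bound_reg a b g hg hT
  have hmeas : Measurable fun z => ‖aff a b z‖ ^ 2 := by
    refine Continuous.measurable ?_; fun_prop
  -- the inverse is taken in `ℝ≥0∞`, where `0⁻¹ = ∞`, so that finiteness forces `Y ≠ 0` a.e.
  have hfin : ∫⁻ z, (ENNReal.ofReal (‖aff a b z‖ ^ 2))⁻¹ ∂(_root_.stdGaussian m)
      ≤ ENNReal.ofReal C := by
    have hlim : ∀ z, Filter.Tendsto
        (fun n : ℕ => (ENNReal.ofReal (‖aff a b z‖ ^ 2 + 1 / ((n : ℝ) + 1)))⁻¹)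
        Filter.atTop (nhds (ENNReal.ofReal (‖aff a b z‖ ^ 2))⁻¹) := by
      intro z
      refine tendsto_inv_iff.2 (ENNReal.tendsto_ofReal ?_)
      simpa using tendsto_one_div_add_atTop_nhds_zero_nat.const_add (‖aff a b z‖ ^ 2)
    calc ∫⁻ z, (ENNReal.ofReal (‖aff a b z‖ ^ 2))⁻¹ ∂(_root_.stdGaussian m)
        = ∫⁻ z, Filter.liminf
            (fun n : ℕ => (ENNReal.ofReal (‖aff a b z‖ ^ 2 + 1 / ((n : ℝ) + 1)))⁻¹)
            Filter.atTop ∂(_root_.stdGaussian m) :=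
          lintegral_congr fun z => (hlim z).liminf_eq.symm
      _ ≤ Filter.liminf (fun n : ℕ => ∫⁻ z,
            (ENNReal.ofReal (‖aff a b z‖ ^ 2 + 1 / ((n : ℝ) + 1)))⁻¹ ∂(_root_.stdGaussian m))
            Filter.atTop :=
          lintegral_liminf_le fun n => (hmeas.add_const _).ennreal_ofReal.inv
      _ ≤ Filter.liminf (fun _ : ℕ => ENNReal.ofReal C) Filter.atTop := by
          refine Filter.liminf_le_liminf (.of_forall fun n => ?_)
          have hε : (0 : ℝ) < 1 / ((n : ℝ) + 1) := by positivity
          have hs : ∀ z, 0 < ‖aff a b z‖ ^ 2 + 1 / ((n : ℝ) + 1) := fun z => by positivity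
          refine le_trans (le_of_eq ?_) (ENNReal.ofReal_le_ofReal (hC _ hε))
          rw [ofReal_integral_eq_lintegral_ofReal (integrable_reg a b hε)
            (.of_forall fun z => (one_div_pos.2 (hs z)).le)]
          refine lintegral_congr fun z => ?_
          rw [one_div (‖aff a b z‖ ^ 2 + _), ENNReal.ofReal_inv_of_pos (hs z)]
      _ = ENNReal.ofReal C := by simp
  have hlt := hfin.trans_lt ENNReal.ofReal_lt_top
  have hpos : ∀ᵐ z ∂(_root_.stdGaussian m), 0 < ‖aff a b z‖ ^ 2 := by
    filter_upwards [ae_lt_top hmeas.ennreal_ofReal.inv hlt.ne] with z hz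
    rw [Pi.inv_apply, ENNReal.inv_lt_top] at hz
    exact ENNReal.ofReal_pos.1 hz
  refine ⟨hpos, (hmeas.const_div 1).aestronglyMeasurable, ?_⟩
  rw [hasFiniteIntegral_iff_ofReal (.of_forall fun z => by positivity)]
  refine lt_of_eq_of_lt (lintegral_congr_ae ?_) hlt
  filter_upwards [hpos] with z hz
  rw [one_div, ENNReal.ofReal_inv_of_pos hz]

/-! ### Removing the regularization -/

/-- Stein's identity for the singular function `⟪u, Y⟫ / ‖Y‖²`, by dominated convergence along
`ε = 1 / (n + 1)`. -/
lemma stein_limit {a : Fin m → E} {b : E}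
    (hpos : ∀ᵐ z ∂(_root_.stdGaussian m), 0 < ‖aff a b z‖ ^ 2)
    (hinv : Integrable (fun z => 1 / ‖aff a b z‖ ^ 2) (_root_.stdGaussian m))
    (i : Fin m) (u : E) :
    ∫ z, z i * (inner ℝ u (aff a b z) / ‖aff a b z‖ ^ 2) ∂(_root_.stdGaussian m)
    = ∫ z, (inner ℝ u (a i) * (1 / ‖aff a b z‖ ^ 2)
        - 2 * (inner ℝ u (aff a b z) * inner ℝ (a i) (aff a b z) / (‖aff a b z‖ ^ 2) ^ 2))
        ∂(_root_.stdGaussian m) := by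
  have hε : ∀ n : ℕ, (0 : ℝ) < 1 / ((n : ℝ) + 1) := fun n => by positivity
  have hs : ∀ (n : ℕ) z, 0 < ‖aff a b z‖ ^ 2 + 1 / ((n : ℝ) + 1) := fun n z => by positivity
  have hle : ∀ (n : ℕ) z, 0 < ‖aff a b z‖ ^ 2 →
      1 / (‖aff a b z‖ ^ 2 + 1 / ((n : ℝ) + 1)) ≤ 1 / ‖aff a b z‖ ^ 2 := fun n z hz =>
    one_div_le_one_div_of_le hz (by linarith [hε n])
  have hlim : ∀ z, Filter.Tendsto (fun n : ℕ => ‖aff a b z‖ ^ 2 + 1 / ((n : ℝ) + 1))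
      Filter.atTop (nhds (‖aff a b z‖ ^ 2)) := fun z => by
    simpa using tendsto_one_div_add_atTop_nhds_zero_nat.const_add (‖aff a b z‖ ^ 2)
  refine tendsto_nhds_unique
    (f := fun n : ℕ => ∫ z, z i * (inner ℝ u (aff a b z) / (‖aff a b z‖ ^ 2 + 1 / ((n : ℝ) + 1)))
      ∂(_root_.stdGaussian m)) (l := Filter.atTop) ?_ ?_
  · refine tendsto_integral_of_dominated_convergence
      (fun z => (1 / ‖aff a b z‖ ^ 2 + z i ^ 2 * ‖u‖ ^ 2) / 2)
      (fun n => (integrable_coord_inner (hε n).le (.of_forall (hs n))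
        (integrable_reg a b (hε n)) i u).aestronglyMeasurable)
      ((hinv.add ((integrable_coord_sq i).mul_const (‖u‖ ^ 2))).div_const 2) (fun n => ?_) ?_
    · filter_upwards [hpos] with z hz
      have := young_coord (aff a b z) u (z i) (hε n).le (hs n z)
      rw [mul_pow, sq_abs] at this
      have := hle n z hz
      rw [Real.norm_eq_abs]
      linarith
    · filter_upwards [hpos] with z hz
      exact (tendsto_const_nhds.div (hlim z) hz.ne').const_mul _
  · simp_rw [fun n : ℕ => stein_reg a b i u (hε n)]
    refine tendsto_integral_of_dominated_convergence
      (fun z => 3 * (‖u‖ * ‖a i‖) * (1 / ‖aff a b z‖ ^ 2))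
      (fun n => (((integrable_reg a b (hε n)).const_mul _).sub
        ((integrable_inner_mul (hε n).le (.of_forall (hs n)) (integrable_reg a b (hε n))
          _ _).const_mul 2)).aestronglyMeasurable)
      (hinv.const_mul _) (fun n => ?_) ?_
    · filter_upwards [hpos] with z hz
      refine (deriv_bound u (a i) (aff a b z) (hε n).le (hs n z)).trans ?_
      have := hle n z hz
      gcongr
    · filter_upwards [hpos] with z hz
      exact ((tendsto_const_nhds.div (hlim z) hz.ne').const_mul _).sub
        ((tendsto_const_nhds.div ((hlim z).pow 2) (pow_pos hz 2).ne').const_mul 2)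

lemma stein_sum {a : Fin m → E} {b : E}
    (hpos : ∀ᵐ z ∂(_root_.stdGaussian m), 0 < ‖aff a b z‖ ^ 2)
    (hinv : Integrable (fun z => 1 / ‖aff a b z‖ ^ 2) (_root_.stdGaussian m))
    (g : Fin m → E) :
    ∫ z, (∑ i, z i * inner ℝ (g i) (aff a b z)) / ‖aff a b z‖ ^ 2 ∂(_root_.stdGaussian m)
    = (∑ i, inner ℝ (g i) (a i)) * ∫ z, 1 / ‖aff a b z‖ ^ 2 ∂(_root_.stdGaussian m)
      - 2 * ∫ z, (∑ i, inner ℝ (g i) (aff a b z) * inner ℝ (a i) (aff a b z))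
        / (‖aff a b z‖ ^ 2) ^ 2 ∂(_root_.stdGaussian m) := by
  have hI1 : ∀ i, Integrable (fun z => z i * (inner ℝ (g i) (aff a b z) / ‖aff a b z‖ ^ 2))
      (_root_.stdGaussian m) := fun i => by
    simpa using integrable_coord_inner (a := a) (b := b) le_rfl (by simpa using hpos)
      (by simpa using hinv) i (g i)
  have hI2 : ∀ i, Integrable (fun z => inner ℝ (g i) (aff a b z) * inner ℝ (a i) (aff a b z)
      / (‖aff a b z‖ ^ 2) ^ 2) (_root_.stdGaussian m) := fun i => by
    simpa using integrable_inner_mul (a := a) (b := b) le_rfl (by simpa using hpos)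
      (by simpa using hinv) (g i) (a i)
  simp_rw [Finset.sum_div, mul_div_assoc (_ : ℝ) (inner ℝ _ _) (‖_‖ ^ 2)]
  rw [integral_finsetSum _ fun i _ => hI1 i, integral_finsetSum _ fun i _ => hI2 i,
    Finset.sum_mul, Finset.mul_sum, ← Finset.sum_sub_distrib]
  refine Finset.sum_congr rfl fun i _ => ?_
  rw [stein_limit hpos hinv, integral_sub (hinv.const_mul _) ((hI2 i).const_mul 2),
    integral_const_mul, integral_const_mul]

end core

/-! ### Translation to matrices -/

section matrices
variable {m d : ℕ}

/-- The `i`-th column of a matrix, as a vector of Euclidean space. -/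
noncomputable def colv (G : Matrix (Fin d) (Fin m) ℝ) (i : Fin m) : EuclideanSpace ℝ (Fin d) :=
  WithLp.toLp 2 (fun k => G k i)

lemma inner_colv (G : Matrix (Fin d) (Fin m) ℝ) (i : Fin m) (y : Fin d → ℝ) :
    inner ℝ (colv G i) (WithLp.toLp 2 y) = (Gᵀ *ᵥ y) i := by
  unfold colv
  rw [EuclideanSpace.inner_toLp_toLp, dotProduct_comm]
  simp [mulVec, dotProduct]

lemma sum_inner_colv (G N : Matrix (Fin d) (Fin m) ℝ) :
    ∑ i, inner ℝ (colv G i) (colv N i) = (G * Nᵀ).trace := by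
  rw [← trace_transpose_mul]
  refine Finset.sum_congr rfl fun i _ => ?_
  exact inner_colv G i _

lemma sum_inner_mul (G N : Matrix (Fin d) (Fin m) ℝ) (y : Fin d → ℝ) :
    ∑ i, inner ℝ (colv G i) (WithLp.toLp 2 y) * inner ℝ (colv N i) (WithLp.toLp 2 y)
      = y ⬝ᵥ (G * Nᵀ) *ᵥ y := by
  simp_rw [inner_colv]
  rw [← mulVec_mulVec, dotProduct_mulVec, ← mulVec_transpose]
  rfl

lemma sum_coord_inner (G : Matrix (Fin d) (Fin m) ℝ) (y : Fin d → ℝ) (z : Fin m → ℝ) :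
    ∑ i, z i * inner ℝ (colv G i) (WithLp.toLp 2 y) = y ⬝ᵥ G *ᵥ z := by
  simp_rw [inner_colv]
  rw [dotProduct_mulVec, ← mulVec_transpose, dotProduct_comm]
  rfl

lemma aff_colv (N : Matrix (Fin d) (Fin m) ℝ) (v : Fin d → ℝ) (z : Fin m → ℝ) :
    aff (colv N) (WithLp.toLp 2 v) z = WithLp.toLp 2 (N *ᵥ z + v) := by
  ext k
  simp [aff, colv, mulVec, dotProduct, add_comm, mul_comm]

lemma norm_sq_toLp (y : Fin d → ℝ) : ‖(WithLp.toLp 2 y : EuclideanSpace ℝ (Fin d))‖ ^ 2 = y ⬝ᵥ y := by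
  rw [EuclideanSpace.real_norm_sq_eq]
  simp [dotProduct, sq]

open scoped MatrixOrder in
lemma exists_transpose_mul_self {S : Matrix (Fin d) (Fin d) ℝ} (hS : S.PosDef) :
    ∃ C : Matrix (Fin d) (Fin d) ℝ, S = Cᵀ * C := by
  obtain ⟨C, hC⟩ := CStarAlgebra.nonneg_iff_eq_star_mul_self.mp hS.posSemidef.nonneg
  exact ⟨C, by rw [hC, star_eq_conjTranspose, conjTranspose_eq_transpose_of_trivial]⟩

end matrices

/-- Equation (stein) of the paper, obtained from the generalized Stein lemma applied
to `x ↦ x/(xᵀPx)`: with `Q = (ξ+τ)ᵀP(ξ+τ)` and `K = (Γ₁-Γ)ᵀ Υ Γ₁ Ω`, `Q > 0`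
almost surely, `E[1/Q] < ∞` and
`E[(ξ+τ)ᵀ(Γ₁-Γ)ᵀΥΓ₁(ξ+τ)/Q] = tr(K) E[1/Q] - 2 E[(ξ+τ)ᵀ K P (ξ+τ)/Q²]`. -/
theorem stmt_10 {m d₁ : ℕ} (hd₁ : 3 ≤ d₁)
    (Ω : Matrix (Fin m) (Fin m) ℝ) (hΩ : Ω.PosSemidef)
    (μ : Measure (Fin m → ℝ)) (hμ : IsGaussianLaw μ 0 Ω)
    (τ : Fin m → ℝ)
    (Γ₁ Γ : Matrix (Fin d₁) (Fin m) ℝ) (hΓ₁τ : Γ₁.mulVec τ = 0)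
    (Υ : Matrix (Fin d₁) (Fin d₁) ℝ) (hΥ : Υ.PosDef) (hΥsymm : Υ.IsSymm)
    (M : Matrix (Fin d₁) (Fin d₁) ℝ) (hMdef : M = (Γ₁ - Γ) * Ω * (Γ₁ - Γ)ᵀ)
    (hMcross : Γ₁ * Ω * (Γ₁ - Γ)ᵀ = M)
    (P : Matrix (Fin m) (Fin m) ℝ) (hPdef : P = (Γ₁ - Γ)ᵀ * Υ * (Γ₁ - Γ))
    (hMpd : M.PosDef) :
    ∀ Q : (Fin m → ℝ) → ℝ, Q = (fun x => (x + τ) ⬝ᵥ P.mulVec (x + τ)) →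
    ∀ K : Matrix (Fin m) (Fin m) ℝ, K = (Γ₁ - Γ)ᵀ * Υ * Γ₁ * Ω →
      (∀ᵐ x ∂μ, 0 < Q x) ∧
      Integrable (fun x => 1 / Q x) μ ∧
      ∫ x, ((x + τ) ⬝ᵥ ((Γ₁ - Γ)ᵀ * Υ * Γ₁).mulVec (x + τ)) / Q x ∂μ
        = K.trace * (∫ x, 1 / Q x ∂μ)
          - 2 * ∫ x, ((x + τ) ⬝ᵥ (K * P).mulVec (x + τ)) / Q x ^ 2 ∂μ := by
  rintro Q rfl K rfl
  obtain ⟨A, rfl, rfl⟩ := hμ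
  obtain ⟨C, rfl⟩ := exists_transpose_mul_self hΥ
  have hCdet : IsUnit C.det := by
    have h := hΥ.det_pos.ne'
    rw [det_mul, det_transpose] at h
    exact (left_ne_zero_of_mul h).isUnit
  have hMdet : IsUnit M.det := hMpd.det_pos.ne'.isUnit
  obtain ⟨D, hD⟩ : ∃ D, D = Γ₁ - Γ := ⟨_, rfl⟩
  rw [← hD] at hMdef hPdef ⊢
  -- the columns of `G₀` are dual to those of `C * D * A`
  obtain ⟨G₀, hG₀⟩ : ∃ G₀, G₀ = (Cᵀ)⁻¹ * M⁻¹ * D * A := ⟨_, rfl⟩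
  have hdual : G₀ * (C * D * A)ᵀ = 1 := by
    have h1 : G₀ * (C * D * A)ᵀ = (Cᵀ)⁻¹ * (M⁻¹ * (D * (A * Aᵀ) * Dᵀ)) * Cᵀ := by
      rw [hG₀]
      simp only [transpose_mul, Matrix.mul_assoc]
    rw [h1, ← hMdef, nonsing_inv_mul _ hMdet, Matrix.mul_one,
      nonsing_inv_mul _ (by rwa [det_transpose])]
  obtain ⟨hpos, hinv⟩ := pos_and_integrable (colv (C * D * A)) (WithLp.toLp 2 ((C * D) *ᵥ τ))
    (colv G₀)
    (fun y => by
      have := sum_inner_mul G₀ (C * D * A) y.ofLp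
      rw [hdual, one_mulVec, ← norm_sq_toLp] at this
      exact this)
    (by rw [sum_inner_colv, hdual, trace_one, Fintype.card_fin]; exact_mod_cast hd₁)
  have hsum := stein_sum hpos hinv (colv (C * Γ₁ * A))
  have hy : ∀ z : Fin m → ℝ, (C * D * A) *ᵥ z + (C * D) *ᵥ τ = (C * D) *ᵥ (0 + A *ᵥ z + τ) := by
    intro z
    rw [zero_add, mulVec_add, mulVec_mulVec]
  have hquad : ∀ (F G : Matrix (Fin d₁) (Fin m) ℝ) (x w : Fin m → ℝ),
      (F *ᵥ x) ⬝ᵥ (G *ᵥ w) = x ⬝ᵥ (Fᵀ * G) *ᵥ w := by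
    intro F G x w
    rw [← mulVec_mulVec, dotProduct_mulVec x, vecMul_transpose]
  have hQ : ∀ z : Fin m → ℝ, ‖aff (colv (C * D * A)) (WithLp.toLp 2 ((C * D) *ᵥ τ)) z‖ ^ 2
      = (0 + A *ᵥ z + τ) ⬝ᵥ P *ᵥ (0 + A *ᵥ z + τ) := by
    intro z
    rw [aff_colv, norm_sq_toLp, hy, hquad, hPdef]
    simp only [transpose_mul, Matrix.mul_assoc]
  have hnum : ∀ z : Fin m → ℝ, ∑ i, z i * inner ℝ (colv (C * Γ₁ * A) i)
        (aff (colv (C * D * A)) (WithLp.toLp 2 ((C * D) *ᵥ τ)) z)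
      = (0 + A *ᵥ z + τ) ⬝ᵥ (Dᵀ * (Cᵀ * C) * Γ₁) *ᵥ (0 + A *ᵥ z + τ) := by
    intro z
    -- `Γ₁ τ = 0` allows the shift by `τ` to be inserted in the second factor
    have h : (C * Γ₁ * A) *ᵥ z = (C * Γ₁) *ᵥ (0 + A *ᵥ z + τ) := by
      rw [zero_add, mulVec_add, ← mulVec_mulVec τ, hΓ₁τ, mulVec_zero, add_zero, mulVec_mulVec]
    rw [aff_colv, sum_coord_inner, hy, h, hquad]
    simp only [transpose_mul, Matrix.mul_assoc]
  have hcross : ∀ z : Fin m → ℝ, ∑ i, inner ℝ (colv (C * Γ₁ * A) i)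
        (aff (colv (C * D * A)) (WithLp.toLp 2 ((C * D) *ᵥ τ)) z)
          * inner ℝ (colv (C * D * A) i)
            (aff (colv (C * D * A)) (WithLp.toLp 2 ((C * D) *ᵥ τ)) z)
      = (0 + A *ᵥ z + τ) ⬝ᵥ (Dᵀ * (Cᵀ * C) * Γ₁ * (A * Aᵀ) * P) *ᵥ (0 + A *ᵥ z + τ) := by
    intro z
    rw [aff_colv, sum_inner_mul, hy, mulVec_mulVec, hquad, hPdef]
    simp only [transpose_mul, Matrix.mul_assoc]
  have htr : ∑ i, inner ℝ (colv (C * Γ₁ * A) i) (colv (C * D * A) i)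
      = (Dᵀ * (Cᵀ * C) * Γ₁ * (A * Aᵀ)).trace := by
    rw [sum_inner_colv, trace_mul_comm, transpose_mul, transpose_mul, Matrix.mul_assoc, trace_mul_comm]
    simp only [Matrix.mul_assoc]
  simp_rw [hQ] at hpos hinv
  simp_rw [hnum, hcross, htr, hQ] at hsum
  have hT : Measurable fun z : Fin m → ℝ => 0 + A *ᵥ z := by
    refine Continuous.measurable ?_; fun_prop
  have hquadm : ∀ B : Matrix (Fin m) (Fin m) ℝ,
      Measurable fun x : Fin m → ℝ => (x + τ) ⬝ᵥ B *ᵥ (x + τ) := fun B => by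
    refine Continuous.measurable ?_; fun_prop
  refine ⟨?_, ?_, ?_⟩
  · rw [ae_map_iff hT.aemeasurable (measurableSet_lt measurable_const (hquadm P))]
    exact hpos
  · rw [integrable_map_measure ((hquadm P).const_div 1).aestronglyMeasurable hT.aemeasurable]
    exact hinv
  · beta_reduce
    rw [integral_map hT.aemeasurable ((hquadm _).fun_div (hquadm P)).aestronglyMeasurable,
      integral_map hT.aemeasurable ((hquadm P).const_div 1).aestronglyMeasurable,
      integral_map hT.aemeasurable ((hquadm _).fun_div ((hquadm P).pow_const 2)).aestronglyMeasurable]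
    exact hsum
end
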